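/- Let n, k be natural numbers and let F ⊆ ℝⁿ be a set that is closed for the Euclidean topology and Zariski constructible, i.e. F is a finite union of sets of the form {x : a(x) = 0} \ {x : b(x) = 0} with a, b real polynomials in n variables. Then there exists a k-regulous function f : ℝⁿ → ℝ with Z(f) = F. Consequently, the k-regulously closed subsets of ℝⁿ are exactly the Euclidean-closed Zariski constructible subsets of ℝⁿ. -/

import Mathlib

open MvPolynomial

/-- A function `f : ℝⁿ → ℝ` is `k`-regulous if it is of class `C^k` on all of `ℝⁿ` and
agrees with a rational function: there are polynomials `p`, `q` with `q ≠ 0` and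
`q(x) * f(x) = p(x)` for every `x`. -/
def IsRegulous (n k : ℕ) (f : (Fin n → ℝ) → ℝ) : Prop :=
  ContDiff ℝ k f ∧ ∃ p q : MvPolynomial (Fin n) ℝ, q ≠ 0 ∧
    ∀ x : Fin n → ℝ, eval x q * f x = eval x p

/-- A subset of `ℝⁿ` is Zariski constructible if it is a finite union of differences of
real polynomial zero sets. -/
def ZariskiConstructible (n : ℕ) (F : Set (Fin n → ℝ)) : Prop :=
  ∃ (m : ℕ) (a b : Fin m → MvPolynomial (Fin n) ℝ),
    F = ⋃ i : Fin m,
      ({x : Fin n → ℝ | eval x (a i) = 0} \ {x : Fin n → ℝ | eval x (b i) = 0})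

/-- A subset of `ℝⁿ` is `k`-regulously closed if it is an intersection of zero sets of
`k`-regulous functions. -/
def RegulouslyClosed (n k : ℕ) (F : Set (Fin n → ℝ)) : Prop :=
  ∃ E : Set ((Fin n → ℝ) → ℝ), (∀ g ∈ E, IsRegulous n k g) ∧
    F = ⋂ g ∈ E, {x : Fin n → ℝ | g x = 0}

/-!
A Euclidean-closed `F = ⋃ᵢ Z(aᵢ) \ Z(bᵢ)` is a zero set because of a Łojasiewicz inequality. Off
`F`, let `g` be continuous and rational and let `h` be rational, and of class `C^k` where `g ≠ 0`.
On bounded sets at positive distance from `F`, the function `|h|` is bounded by a polynomial in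
`1 / |g|` whose degree does not depend on the set: the growth of a semialgebraic function of one
variable is polynomial, because its values are roots of finitely many polynomials. The same holds
for the partial derivatives of `h`, so `g ^ M * h`, extended by zero, is of class `C^k` off `F` for
large `M`. For `g = bᵢ` and `h = 1 / aᵢ` this makes the weight `1 / (1 + (bᵢ ^ M / aᵢ) ^ 2)`, which
is `1` where `bᵢ = 0`, of class `C^k` and positive off `F`; it tends to `0` along `Z(aᵢ) \ Z(bᵢ)`.
The product of these weights, extended by `0` to `F`, is continuous with zero set `F`, and the same
argument shows that a high power of it is of class `C^k`.

That semialgebraic sets are closed under projection comes from Hermite's form of Sturm's theorem: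
the Cauchy index of `P' Q / P` is the sum of the signs of `Q` at the roots of `P`, and the Euclidean
algorithm computes it from finitely many signs of polynomials in the coefficients.

Conversely, the common zeros of regulous functions are constructible by Noetherian induction on an
ideal `I` of polynomials, which may be assumed prime. The real points of `I` are generically dense:
off some hypersurface not containing all of the locus of `I`, they are limits of real points that
avoid any other such hypersurface. A continuous rational function satisfies `Q g = P` on the real
points of `I` with `Q ∉ I`: expand a given denominator along parallel lines. So either all the
functions vanish on the real points off a hypersurface, or one of them is nonzero at a generic real
point, and then `P ∉ I` confines the common zeros to the smaller locus `P = 0`.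
-/

open Filter Topology
open scoped Polynomial ContDiff

section CauchyIndex

theorem eventually_sign_eval_eq (f : ℝ[X]) :
    ∀ᶠ t in atTop, SignType.sign (f.eval t) = SignType.sign f.leadingCoeff := by
  obtain ⟨φ, hφ, hf⟩ := f.isEquivalent_atTop_lead.exists_eq_mul
  filter_upwards [hf, hφ.eventually_const_lt zero_lt_one, eventually_gt_atTop 0] with t ht hφt h0
  rw [ht, Pi.mul_apply, sign_mul, sign_mul, sign_pow, sign_pos hφt, sign_pos h0, one_mul, one_pow,
    mul_one]

theorem sign_eval_eq_sign_leadingCoeff {f : ℝ[X]} {t : ℝ} (h : ∀ s, t ≤ s → f.eval s ≠ 0) :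
    SignType.sign (f.eval t) = SignType.sign f.leadingCoeff := by
  have hcont : ContinuousOn (fun s => SignType.sign (f.eval s)) (Set.Ici t) := fun s hs =>
    ((continuousAt_sign_of_ne_zero (h s hs)).comp (f := fun s => f.eval s)
      f.continuous.continuousAt).continuousWithinAt
  obtain ⟨s, hs, hts⟩ := ((eventually_sign_eval_eq f).and (eventually_ge_atTop t)).exists
  exact (isPreconnected_Ici.constant hcont Set.self_mem_Ici hts).trans hs

theorem exists_eq_X_sub_C_pow_mul {f : ℝ[X]} (hf : f ≠ 0) (t : ℝ) :
    ∃ (m : ℕ) (u : ℝ[X]), u.eval t ≠ 0 ∧ f = (Polynomial.X - Polynomial.C t) ^ m * u := by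
  obtain ⟨u, hu, hdvd⟩ := Polynomial.exists_eq_pow_rootMultiplicity_mul_and_not_dvd f hf t
  exact ⟨_, u, fun h => hdvd (Polynomial.dvd_iff_isRoot.2 h), hu⟩

theorem rootMultiplicity_X_sub_C_pow_mul {t : ℝ} {u : ℝ[X]} (hu : u.eval t ≠ 0) (m : ℕ) :
    ((Polynomial.X - Polynomial.C t) ^ m * u).rootMultiplicity t = m := by
  have hu0 : u ≠ 0 := by rintro rfl; exact hu Polynomial.eval_zero
  rw [mul_comm, Polynomial.rootMultiplicity_mul_X_sub_C_pow hu0,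
    Polynomial.rootMultiplicity_eq_zero hu, zero_add]

/-- The sign of `f` immediately to the right of `t`, computed from the cofactor of the highest
power of `X - t` dividing `f`. -/
noncomputable def signRight (t : ℝ) (f : ℝ[X]) : ℤ :=
  SignType.sign
    ((f /ₘ (Polynomial.X - Polynomial.C t) ^ f.rootMultiplicity t).eval t)

theorem signRight_X_sub_C_pow_mul {t : ℝ} {u : ℝ[X]} (hu : u.eval t ≠ 0) (m : ℕ) :
    signRight t ((Polynomial.X - Polynomial.C t) ^ m * u) = SignType.sign (u.eval t) := by
  rw [signRight, rootMultiplicity_X_sub_C_pow_mul hu,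
    Polynomial.mul_divByMonic_cancel_left _ ((Polynomial.monic_X_sub_C t).pow m)]

theorem signRight_of_eval_ne_zero {t : ℝ} {f : ℝ[X]} (hf : f.eval t ≠ 0) :
    signRight t f = SignType.sign (f.eval t) := by
  simpa only [pow_zero, one_mul] using signRight_X_sub_C_pow_mul hf 0

theorem signRight_zero (t : ℝ) : signRight t 0 = 0 := by
  simp [signRight]

theorem signRight_mul (t : ℝ) (f g : ℝ[X]) :
    signRight t (f * g) = signRight t f * signRight t g := by
  rcases eq_or_ne f 0 with rfl | hf
  · simp [signRight_zero]
  rcases eq_or_ne g 0 with rfl | hg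
  · simp [signRight_zero]
  obtain ⟨m, u, hu, rfl⟩ := exists_eq_X_sub_C_pow_mul hf t
  obtain ⟨n, v, hv, rfl⟩ := exists_eq_X_sub_C_pow_mul hg t
  have huv : (u * v).eval t ≠ 0 := by simp [hu, hv]
  rw [mul_mul_mul_comm, ← pow_add, signRight_X_sub_C_pow_mul huv, signRight_X_sub_C_pow_mul hu,
    signRight_X_sub_C_pow_mul hv, Polynomial.eval_mul, sign_mul, SignType.coe_mul]

/-- The sign of `f` immediately to the right of `t` minus its sign immediately to the left. -/
noncomputable def signJump (t : ℝ) (f : ℝ[X]) : ℤ :=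
  (1 - (-1) ^ f.rootMultiplicity t) * signRight t f

/-- The sign of `f` at `+∞` minus its sign at `-∞`. -/
noncomputable def totalJump (f : ℝ[X]) : ℤ :=
  (1 - (-1) ^ f.natDegree) * SignType.sign f.leadingCoeff

theorem signJump_X_sub_C_pow_mul {t : ℝ} {u : ℝ[X]} (hu : u.eval t ≠ 0) (m : ℕ) :
    signJump t ((Polynomial.X - Polynomial.C t) ^ m * u)
      = (1 - (-1) ^ m) * SignType.sign (u.eval t) := by
  rw [signJump, rootMultiplicity_X_sub_C_pow_mul hu, signRight_X_sub_C_pow_mul hu]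

theorem signJump_zero (t : ℝ) : signJump t 0 = 0 := by
  rw [signJump, signRight_zero, mul_zero]

theorem signJump_mul_of_eval_ne_zero {t : ℝ} {f : ℝ[X]} (hf : f.eval t ≠ 0) (g : ℝ[X]) :
    signJump t (f * g) = SignType.sign (f.eval t) * signJump t g := by
  rcases eq_or_ne g 0 with rfl | hg
  · simp [signJump_zero]
  have hfg : f * g ≠ 0 := mul_ne_zero (by rintro rfl; exact hf Polynomial.eval_zero) hg
  rw [signJump, signJump, Polynomial.rootMultiplicity_mul hfg,
    Polynomial.rootMultiplicity_eq_zero hf, zero_add, signRight_mul,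
    signRight_of_eval_ne_zero hf, mul_left_comm]

theorem totalJump_eq_zero_of_no_root {f : ℝ[X]} (hf : ∀ t, ¬ f.IsRoot t) : totalJump f = 0 := by
  have htop := sign_eval_eq_sign_leadingCoeff (f := f) (t := 0) fun s _ => hf s
  have hbot := sign_eval_eq_sign_leadingCoeff (f := f.comp (-Polynomial.X)) (t := 0) fun s _ => by
    simpa using hf (-s)
  have hsign := congrArg (fun s : SignType => (s : ℤ)) (htop.symm.trans (by simpa using hbot))
  simp only [sign_mul, sign_pow, sign_neg (neg_one_lt_zero (R := ℝ)), SignType.coe_mul,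
    SignType.coe_pow, SignType.coe_neg_one] at hsign
  rw [totalJump]
  linear_combination hsign

theorem sum_signJump {f : ℝ[X]} (hf : f ≠ 0) {s : Finset ℝ} (hs : ∀ t, f.IsRoot t → t ∈ s) :
    ∑ t ∈ s, signJump t f = totalJump f := by
  induction s using Finset.induction_on_max generalizing f with
  | empty =>
    rw [Finset.sum_empty, totalJump_eq_zero_of_no_root fun t ht => Finset.notMem_empty t (hs t ht)]
  | insert a s hlt ih =>
    obtain ⟨m, g, hga, rfl⟩ := exists_eq_X_sub_C_pow_mul hf a
    have hg : g ≠ 0 := right_ne_zero_of_mul hf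
    have hroot : ∀ t, g.IsRoot t → t ∈ s := fun t ht =>
      (Finset.mem_insert.1 (hs t (ht.dvd (dvd_mul_left _ _)))).resolve_left
        (by rintro rfl; exact hga ht)
    have hsign : SignType.sign (g.eval a) = SignType.sign g.leadingCoeff :=
      sign_eval_eq_sign_leadingCoeff fun t ht h => (hlt t (hroot t h)).not_ge ht
    have hjump : ∀ t ∈ s, signJump t ((Polynomial.X - Polynomial.C a) ^ m * g)
        = (-1) ^ m * signJump t g := fun t ht => by
      have hneg : t - a < 0 := sub_neg.2 (hlt t ht)
      rw [signJump_mul_of_eval_ne_zero (by simp [hneg.ne])]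
      simp [sign_pow, sign_neg hneg]
    rw [Finset.sum_insert fun h => (hlt a h).false, Finset.sum_congr rfl hjump, ← Finset.mul_sum,
      ih hg hroot, signJump_X_sub_C_pow_mul hga, hsign, totalJump, totalJump,
      Polynomial.natDegree_mul (left_ne_zero_of_mul hf) hg, Polynomial.leadingCoeff_mul]
    simp only [Polynomial.natDegree_pow, Polynomial.natDegree_X_sub_C, Polynomial.leadingCoeff_pow,
      Polynomial.leadingCoeff_X_sub_C, one_pow, one_mul, mul_one, pow_add]
    ring

open Classical in
/-- The contribution to `cauchyIndex P Q` of a point `t`: the jump at `t` of the sign of `Q / P`,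
which vanishes unless `Q / P` has a pole at `t`. -/
noncomputable def poleJump (t : ℝ) (P Q : ℝ[X]) : ℤ :=
  if (Polynomial.X - Polynomial.C t) ^ P.rootMultiplicity t ∣ Q then 0 else signJump t (P * Q)

/-- Twice the Cauchy index of the rational function `Q / P`: the sum over its real poles of
`2` for a jump from `-∞` to `+∞` and `-2` for a jump from `+∞` to `-∞`. -/
noncomputable def cauchyIndex (P Q : ℝ[X]) : ℤ :=
  ∑ t ∈ P.roots.toFinset, poleJump t P Q

theorem poleJump_of_not_isRoot {t : ℝ} {P : ℝ[X]} (h : ¬ P.IsRoot t) (Q : ℝ[X]) :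
    poleJump t P Q = 0 := by
  rw [poleJump, Polynomial.rootMultiplicity_eq_zero h, pow_zero, if_pos (one_dvd Q)]

theorem cauchyIndex_eq_sum {P : ℝ[X]} (Q : ℝ[X]) {s : Finset ℝ} (hs : P.roots.toFinset ⊆ s) :
    cauchyIndex P Q = ∑ t ∈ s, poleJump t P Q := by
  refine Finset.sum_subset hs fun t _ ht => ?_
  rcases eq_or_ne P 0 with rfl | hP
  · simp [poleJump]
  · exact poleJump_of_not_isRoot (fun h => ht (by simpa [hP] using h)) Q

theorem cauchyIndex_zero_left (Q : ℝ[X]) : cauchyIndex 0 Q = 0 := by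
  simp [cauchyIndex]

theorem cauchyIndex_zero_right (P : ℝ[X]) : cauchyIndex P 0 = 0 := by
  simp [cauchyIndex, poleJump]

theorem poleJump_add_poleJump_swap {P Q : ℝ[X]} (hP : P ≠ 0) (hQ : Q ≠ 0) (t : ℝ) :
    poleJump t P Q + poleJump t Q P = signJump t (P * Q) := by
  rw [poleJump, poleJump, mul_comm Q P, ← Polynomial.le_rootMultiplicity_iff hQ,
    ← Polynomial.le_rootMultiplicity_iff hP]
  rcases lt_trichotomy (P.rootMultiplicity t) (Q.rootMultiplicity t) with h | h | h
  · simp [h.le, h]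
  · rw [if_pos h.le, if_pos h.ge, signJump, Polynomial.rootMultiplicity_mul (mul_ne_zero hP hQ), h,
      Even.neg_one_pow ⟨_, rfl⟩, sub_self, zero_mul, add_zero]
  · simp [h.le, h]

theorem cauchyIndex_add_cauchyIndex_swap (P Q : ℝ[X]) :
    cauchyIndex P Q + cauchyIndex Q P = totalJump (P * Q) := by
  rcases eq_or_ne P 0 with rfl | hP
  · simp [cauchyIndex_zero_left, cauchyIndex_zero_right, totalJump]
  rcases eq_or_ne Q 0 with rfl | hQ
  · simp [cauchyIndex_zero_left, cauchyIndex_zero_right, totalJump]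
  have hroots : ∀ t, (P * Q).IsRoot t → t ∈ P.roots.toFinset ∪ Q.roots.toFinset := fun t ht => by
    simpa [hP, hQ] using ht
  rw [cauchyIndex_eq_sum Q Finset.subset_union_left, cauchyIndex_eq_sum P Finset.subset_union_right,
    ← Finset.sum_add_distrib, ← sum_signJump (mul_ne_zero hP hQ) hroots]
  exact Finset.sum_congr rfl fun t _ => poleJump_add_poleJump_swap hP hQ t

theorem poleJump_mul_add (t : ℝ) (P S R : ℝ[X]) : poleJump t P (P * S + R) = poleJump t P R := by
  rw [poleJump, poleJump, dvd_add_right ((P.pow_rootMultiplicity_dvd t).mul_right S)]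
  split_ifs with hdvd
  · rfl
  have hR : R ≠ 0 := by rintro rfl; exact hdvd (dvd_zero _)
  rcases eq_or_ne P 0 with rfl | hP
  · simp
  obtain ⟨k, v, hv, rfl⟩ := exists_eq_X_sub_C_pow_mul hR t
  obtain ⟨m, u, hu, rfl⟩ := exists_eq_X_sub_C_pow_mul hP t
  rw [rootMultiplicity_X_sub_C_pow_mul hu] at hdvd
  have hlt : k < m := not_le.1 fun h => hdvd ((pow_dvd_pow _ h).mul_right v)
  obtain ⟨d, rfl⟩ := Nat.exists_eq_add_of_lt hlt
  set π : ℝ[X] := Polynomial.X - Polynomial.C t with hπ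
  have heval : (u * (v + π ^ (d + 1) * (u * S))).eval t = (u * v).eval t := by simp [hπ]
  have huv : (u * v).eval t ≠ 0 := by simp [hu, hv]
  calc signJump t (π ^ (k + d + 1) * u * (π ^ (k + d + 1) * u * S + π ^ k * v))
      = signJump t (π ^ (k + d + 1 + k) * (u * (v + π ^ (d + 1) * (u * S)))) := by
        congr 1; ring
    _ = signJump t (π ^ (k + d + 1 + k) * (u * v)) := by
        rw [signJump_X_sub_C_pow_mul (heval ▸ huv), signJump_X_sub_C_pow_mul huv, heval]
    _ = signJump t (π ^ (k + d + 1) * u * (π ^ k * v)) := by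
        congr 1; ring

theorem cauchyIndex_mul_add (P S R : ℝ[X]) : cauchyIndex P (P * S + R) = cauchyIndex P R :=
  Finset.sum_congr rfl fun t _ => poleJump_mul_add t P S R

theorem cauchyIndex_C_mul (P Q : ℝ[X]) (k : ℝ) :
    cauchyIndex P (Polynomial.C k * Q) = SignType.sign k * cauchyIndex P Q := by
  rcases eq_or_ne k 0 with rfl | hk
  · simp [cauchyIndex_zero_right]
  rw [cauchyIndex, cauchyIndex, Finset.mul_sum]
  refine Finset.sum_congr rfl fun t _ => ?_
  rw [poleJump, poleJump, (Polynomial.isUnit_C.2 hk.isUnit).dvd_mul_left, mul_left_comm,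
    signJump_mul_of_eval_ne_zero (by simpa using hk), Polynomial.eval_C, mul_ite, mul_zero]

theorem cauchyIndex_of_C_mul_eq {P Q S R : ℝ[X]} {k : ℝ} (hk : k ≠ 0)
    (h : Polynomial.C k * P = Q * S + R) :
    cauchyIndex P Q = totalJump (P * Q) - SignType.sign k * cauchyIndex Q R := by
  have hsq : (SignType.sign k : ℤ) * SignType.sign k = 1 := by
    rcases hk.lt_or_gt with h | h <;> simp [h]
  rw [← cauchyIndex_add_cauchyIndex_swap, ← cauchyIndex_mul_add Q S R, ← h, cauchyIndex_C_mul,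
    ← mul_assoc, hsq, one_mul, add_sub_cancel_right]

theorem exists_eq_X_sub_C_pow_mul_derivative {P : ℝ[X]} {t : ℝ} (hP : P ≠ 0) (ht : P.IsRoot t) :
    ∃ (m : ℕ) (u w : ℝ[X]), P = (Polynomial.X - Polynomial.C t) ^ (m + 1) * u ∧
      Polynomial.derivative P = (Polynomial.X - Polynomial.C t) ^ m * w ∧
      w.eval t = (m + 1) * u.eval t ∧ u.eval t ≠ 0 := by
  obtain ⟨m, u, hu, rfl⟩ := exists_eq_X_sub_C_pow_mul hP t
  obtain _ | m := m
  · exact absurd ht (by simpa using hu)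
  refine ⟨m, u, Polynomial.C (m + 1 : ℝ) * u +
    (Polynomial.X - Polynomial.C t) * Polynomial.derivative u, rfl, ?_, by simp, hu⟩
  rw [Polynomial.derivative_mul, Polynomial.derivative_X_sub_C_pow]
  simp only [Nat.add_sub_cancel, Nat.cast_succ]
  ring

theorem poleJump_derivative_mul {P : ℝ[X]} (hP : P ≠ 0) (Q : ℝ[X]) {t : ℝ} (ht : P.IsRoot t) :
    poleJump t P (Polynomial.derivative P * Q) = 2 * SignType.sign (Q.eval t) := by
  obtain ⟨m, u, w, hPu, hPw, hwt, hu⟩ := exists_eq_X_sub_C_pow_mul_derivative hP ht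
  have hmul : P.rootMultiplicity t = m + 1 := by rw [hPu, rootMultiplicity_X_sub_C_pow_mul hu]
  have hX : (Polynomial.X - Polynomial.C t) ^ m ≠ 0 := pow_ne_zero m (Polynomial.X_sub_C_ne_zero t)
  have hm : (0 : ℝ) < m + 1 := by positivity
  have hdvd : (Polynomial.X - Polynomial.C t) ^ (m + 1) ∣ Polynomial.derivative P * Q ↔
      Q.eval t = 0 := by
    rw [hPw, mul_assoc, pow_succ, mul_dvd_mul_iff_left hX, Polynomial.dvd_iff_isRoot,
      Polynomial.IsRoot, Polynomial.eval_mul, hwt]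
    simp [hu, hm.ne']
  rw [poleJump, hmul, hdvd]
  split_ifs with hQ
  · simp [hQ]
  have hprod : P * (Polynomial.derivative P * Q)
      = (Polynomial.X - Polynomial.C t) ^ (2 * m + 1) * (u * w * Q) := by
    rw [hPw, hPu]; ring
  have heval : (u * w * Q).eval t = (m + 1) * u.eval t ^ 2 * Q.eval t := by
    simp only [Polynomial.eval_mul, hwt]; ring
  have hsq : 0 < (m + 1) * u.eval t ^ 2 := by positivity
  rw [hprod, signJump_X_sub_C_pow_mul (by simp [heval, hQ, hu, hm.ne']), heval, sign_mul,
    sign_pos hsq, one_mul, (odd_two_mul_add_one m).neg_one_pow]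
  rfl

theorem cauchyIndex_derivative_mul (P Q : ℝ[X]) :
    cauchyIndex P (Polynomial.derivative P * Q)
      = 2 * ∑ t ∈ P.roots.toFinset, (SignType.sign (Q.eval t) : ℤ) := by
  rw [cauchyIndex, Finset.mul_sum]
  refine Finset.sum_congr rfl fun t ht => ?_
  have hroot := Polynomial.mem_roots'.1 (Multiset.mem_toFinset.1 ht)
  exact poleJump_derivative_mul hroot.1 Q hroot.2

end CauchyIndex

theorem exists_C_leadingCoeff_pow_mul_eq {A : Type*} [CommRing A] {Q : A[X]} (hQ : Q ≠ 0)
    (P : A[X]) : ∃ (e : ℕ) (S R : A[X]),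
      Polynomial.C (Q.leadingCoeff ^ e) * P = Q * S + R ∧ R.degree < Q.degree := by
  induction hn : P.degree using WellFoundedLT.induction generalizing P with
  | ind n ih =>
  rcases lt_or_ge P.degree Q.degree with hlt | hle
  · exact ⟨0, 0, P, by simp, hlt⟩
  have hP : P ≠ 0 := by rintro rfl; exact hQ (Polynomial.degree_eq_bot.1 (le_bot_iff.1 hle))
  set T : A[X] := Polynomial.C P.leadingCoeff * Polynomial.X ^ (P.natDegree - Q.natDegree)
  have hlt : (Polynomial.C Q.leadingCoeff * P - Q * T).degree < n := by
    have hnat := Polynomial.natDegree_le_natDegree hle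
    rw [← hn, Polynomial.degree_eq_natDegree hP, Polynomial.degree_lt_iff_coeff_zero]
    intro m hm
    obtain ⟨i, rfl⟩ := Nat.exists_eq_add_of_le hm
    have hT : (Q * T).coeff (P.natDegree + i) = P.leadingCoeff * Q.coeff (Q.natDegree + i) := by
      rw [mul_left_comm, Polynomial.coeff_C_mul, show P.natDegree + i
        = Q.natDegree + i + (P.natDegree - Q.natDegree) by lia, Polynomial.coeff_mul_X_pow]
    rw [Polynomial.coeff_sub, Polynomial.coeff_C_mul, hT]
    obtain rfl | hi := Nat.eq_zero_or_pos i
    · exact sub_eq_zero.2 (mul_comm _ _)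
    · rw [Polynomial.coeff_eq_zero_of_natDegree_lt (Nat.lt_add_of_pos_right hi),
        Polynomial.coeff_eq_zero_of_natDegree_lt (Nat.lt_add_of_pos_right hi)]
      simp
  obtain ⟨e, S, R, hSR, hR⟩ := ih _ hlt _ rfl
  refine ⟨e + 1, S + Polynomial.C (Q.leadingCoeff ^ e) * T, R, ?_, hR⟩
  rw [pow_succ, Polynomial.C_mul]
  linear_combination hSR

section SignDetermined

variable {Y A : Type*} [CommRing A]

/-- For a set `Y` of points at which the elements of `A` can be evaluated, `f : Y → α` is
sign-determined if `f y` depends only on the signs at `y` of finitely many elements of `A`. -/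
def SignDetermined {α : Type*} (ev : Y → A →+* ℝ) (f : Y → α) : Prop :=
  ∃ s : Finset A, ∀ x y, (∀ a ∈ s, SignType.sign (ev x a) = SignType.sign (ev y a)) → f x = f y

namespace SignDetermined

variable {ev : Y → A →+* ℝ} {α β γ : Type*}

theorem const (c : α) : SignDetermined ev fun _ => c :=
  ⟨∅, fun _ _ _ => rfl⟩

theorem sign (a : A) : SignDetermined ev fun x => SignType.sign (ev x a) :=
  ⟨{a}, fun _ _ h => h a (Finset.mem_singleton_self a)⟩

theorem comp {f : Y → α} (hf : SignDetermined ev f) (g : α → β) :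
    SignDetermined ev fun x => g (f x) :=
  let ⟨s, hs⟩ := hf
  ⟨s, fun x y h => congrArg g (hs x y h)⟩

theorem pi {ι : Type*} [Finite ι] {α : ι → Type*} {f : ∀ i, Y → α i}
    (hf : ∀ i, SignDetermined ev (f i)) : SignDetermined ev fun x i => f i x := by
  classical
  cases nonempty_fintype ι
  choose s hs using hf
  exact ⟨Finset.univ.biUnion s, fun x y h => funext fun i => hs i x y fun a ha =>
    h a (Finset.mem_biUnion.2 ⟨i, Finset.mem_univ i, ha⟩)⟩

theorem map₂ {f : Y → α} {g : Y → β} (F : α → β → γ) (hf : SignDetermined ev f)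
    (hg : SignDetermined ev g) : SignDetermined ev fun x => F (f x) (g x) := by
  classical
  obtain ⟨s, hs⟩ := hf
  obtain ⟨t, ht⟩ := hg
  exact ⟨s ∪ t, fun x y h => congrArg₂ F (hs x y fun a ha => h a (Finset.mem_union_left t ha))
    (ht x y fun a ha => h a (Finset.mem_union_right s ha))⟩

theorem congr {f g : Y → α} (hf : SignDetermined ev f) (h : ∀ x, g x = f x) :
    SignDetermined ev g :=
  (funext h : g = f) ▸ hf

theorem congr_iff {p q : Y → Prop} (hp : SignDetermined ev p) (h : ∀ x, q x ↔ p x) :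
    SignDetermined ev q :=
  hp.congr fun x => propext (h x)

theorem comap {Y' A' : Type*} [CommRing A'] {ev' : Y' → A' →+* ℝ} {f : Y' → α}
    (hf : SignDetermined ev' f) (c : Y → Y') (Φ : A' →+* A)
    (h : ∀ y, ev' (c y) = (ev y).comp Φ) : SignDetermined ev fun y => f (c y) := by
  classical
  obtain ⟨s, hs⟩ := hf
  refine ⟨s.image Φ, fun x y hxy => hs _ _ fun a ha => ?_⟩
  rw [h, h]
  exact hxy _ (Finset.mem_image_of_mem Φ ha)

theorem eq_zero (a : A) : SignDetermined ev fun x => ev x a = 0 :=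
  ((sign a).comp (· = 0)).congr_iff fun _ => sign_eq_zero_iff.symm

theorem pos (a : A) : SignDetermined ev fun x => 0 < ev x a :=
  ((sign a).comp (· = 1)).congr_iff fun _ => sign_eq_one_iff.symm

theorem and {p q : Y → Prop} (hp : SignDetermined ev p) (hq : SignDetermined ev q) :
    SignDetermined ev fun x => p x ∧ q x :=
  map₂ And hp hq

theorem or {p q : Y → Prop} (hp : SignDetermined ev p) (hq : SignDetermined ev q) :
    SignDetermined ev fun x => p x ∨ q x :=
  map₂ Or hp hq

theorem not {p : Y → Prop} (hp : SignDetermined ev p) : SignDetermined ev fun x => ¬ p x :=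
  hp.comp Not

theorem forall_mem {ι : Type*} (s : Finset ι) {p : ι → Y → Prop}
    (hp : ∀ i, SignDetermined ev (p i)) : SignDetermined ev fun x => ∀ i ∈ s, p i x :=
  ((pi fun i : s => hp i).comp fun b => ∀ i, b i).congr_iff fun _ => by
    simp only [Subtype.forall]

open Classical in
theorem ite {p : Y → Prop} {f g : Y → α} (hp : SignDetermined ev p) (hf : SignDetermined ev f)
    (hg : SignDetermined ev g) : SignDetermined ev fun x => if p x then f x else g x :=
  map₂ (fun (b : Prop) (c : α × α) => if b then c.1 else c.2) hp (map₂ Prod.mk hf hg)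

end SignDetermined
end SignDetermined

theorem exists_isRoot_gt {f : ℝ[X]} {t : ℝ} (ht : 0 < f.eval t) (hf : ¬ 0 < f.leadingCoeff) :
    ∃ z, t < z ∧ f.IsRoot z := by
  by_contra! hroot
  have hne : ∀ s, t ≤ s → f.eval s ≠ 0 := fun s hs => by
    rcases hs.eq_or_lt with rfl | hs
    · exact ht.ne'
    · exact hroot s hs
  rw [← sign_eq_one_iff, ← sign_eval_eq_sign_leadingCoeff hne, sign_eq_one_iff] at hf
  exact hf ht

theorem exists_isRoot_lt {f : ℝ[X]} {t : ℝ} (ht : 0 < f.eval t)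
    (hf : ¬ 0 < (f.comp (-Polynomial.X)).leadingCoeff) : ∃ z, z < t ∧ f.IsRoot z := by
  obtain ⟨z, hz, hroot⟩ := exists_isRoot_gt (t := -t) (by simpa using ht) hf
  exact ⟨-z, neg_lt.1 hz, by simpa using hroot⟩

/-- Rolle's theorem for a product of polynomials, with the critical point in the region where all
the factors are positive. -/
theorem exists_derivative_prod_eq_zero {ι : Type*} {s : Finset ι} {q : ι → ℝ[X]} {y t z : ℝ}
    (hyt : y < t) (htz : t < z) (hy : (∏ i ∈ s, q i).IsRoot y) (hz : (∏ i ∈ s, q i).IsRoot z)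
    (ht : ∀ i ∈ s, 0 < (q i).eval t) :
    ∃ c, (Polynomial.derivative (∏ i ∈ s, q i)).eval c = 0 ∧ ∀ i ∈ s, 0 < (q i).eval c := by
  set f := ∏ i ∈ s, q i with hf
  have hK : IsCompact (Set.Icc y z ∩ {c | ∀ i ∈ s, 0 ≤ (q i).eval c}) :=
    isCompact_Icc.inter_right (by
      simp only [Set.ofPred_forall]
      exact isClosed_biInter fun i _ => isClosed_le continuous_const (q i).continuous)
  obtain ⟨c, ⟨hcyz, hc⟩, hmax⟩ := hK.exists_isMaxOn
    ⟨t, ⟨hyt.le, htz.le⟩, fun i hi => (ht i hi).le⟩ f.continuous.continuousOn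
  have hfc : 0 < f.eval c := lt_of_lt_of_le
    (by simp only [hf, Polynomial.eval_prod]; exact Finset.prod_pos ht)
    (hmax ⟨⟨hyt.le, htz.le⟩, fun i hi => (ht i hi).le⟩)
  have hpos : ∀ i ∈ s, 0 < (q i).eval c := fun i hi => (hc i hi).lt_of_ne' fun h => hfc.ne' (by
    rw [hf, Polynomial.eval_prod, Finset.prod_eq_zero hi h])
  have hyc : y < c := hcyz.1.lt_of_ne (by rintro rfl; exact hfc.ne' hy)
  have hcz : c < z := hcyz.2.lt_of_ne (by rintro rfl; exact hfc.ne' hz)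
  have hloc : IsLocalMax (fun x => f.eval x) c := by
    have hnhds : ∀ᶠ x in 𝓝 c, ∀ i ∈ s, 0 < (q i).eval x := (Finset.eventually_all s).2 fun i hi =>
      (q i).continuous.continuousAt.eventually_const_lt (hpos i hi)
    filter_upwards [Icc_mem_nhds hyc hcz, hnhds] with x hx hxs
    exact hmax ⟨hx, fun i hi => (hxs i hi).le⟩
  exact ⟨c, hloc.hasDerivAt_eq_zero (f.hasDerivAt c), hpos⟩

theorem exists_forall_eval_pos_iff {ι : Type*} (s : Finset ι) (q : ι → ℝ[X]) :
    (∃ t, ∀ i ∈ s, 0 < (q i).eval t) ↔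
      (∀ i ∈ s, 0 < (q i).leadingCoeff) ∨
      (∀ i ∈ s, 0 < ((q i).comp (-Polynomial.X)).leadingCoeff) ∨
      (Polynomial.derivative (∏ i ∈ s, q i) ≠ 0 ∧
        ∃ t, (Polynomial.derivative (∏ i ∈ s, q i)).eval t = 0 ∧ ∀ i ∈ s, 0 < (q i).eval t) := by
  have hexists : ∀ p : ι → ℝ[X], (∀ i ∈ s, 0 < (p i).leadingCoeff) →
      ∃ t, ∀ i ∈ s, 0 < (p i).eval t := fun p hp =>
    ((Finset.eventually_all s).2 fun i hi => (eventually_sign_eval_eq (p i)).mono fun t ht => by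
      rwa [sign_pos (hp i hi), sign_eq_one_iff] at ht).exists
  constructor
  · rintro ⟨t, ht⟩
    by_contra! h
    obtain ⟨⟨i, hi, hilc⟩, ⟨j, hj, hjlc⟩, hder⟩ := h
    obtain ⟨z, htz, hz⟩ := exists_isRoot_gt (ht i hi) hilc.not_gt
    obtain ⟨y, hyt, hy⟩ := exists_isRoot_lt (ht j hj) hjlc.not_gt
    have hprod : ∀ i ∈ s, ∀ x, (q i).IsRoot x → (∏ i ∈ s, q i).IsRoot x := fun i hi x hx =>
      hx.dvd (Finset.dvd_prod_of_mem q hi)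
    obtain ⟨c, hc, hcpos⟩ :=
      exists_derivative_prod_eq_zero hyt htz (hprod j hj y hy) (hprod i hi z hz) ht
    have hne : Polynomial.derivative (∏ i ∈ s, q i) ≠ 0 := fun hzero => by
      have hpos : 0 < (∏ i ∈ s, q i).eval t := by
        rw [Polynomial.eval_prod]; exact Finset.prod_pos ht
      have hroot : (∏ i ∈ s, q i).eval z = 0 := hprod i hi z hz
      rw [Polynomial.eq_C_of_derivative_eq_zero hzero, Polynomial.eval_C] at hpos hroot
      exact hpos.ne' hroot
    obtain ⟨l, hl, hlc⟩ := hder hne c hc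
    exact hlc.not_gt (hcpos l hl)
  · rintro (h | h | ⟨_, t, _, h⟩)
    · exact hexists q h
    · obtain ⟨t, ht⟩ := hexists _ h
      exact ⟨-t, fun i hi => by simpa using ht i hi⟩
    · exact ⟨t, h⟩

theorem sign_sq_add_sign_nonneg (x : ℝ) :
    0 ≤ (SignType.sign x : ℤ) ^ 2 + (SignType.sign x : ℤ) := by
  generalize SignType.sign x = e
  cases e <;> decide

theorem sign_sq_add_sign_ne_zero_iff (x : ℝ) :
    (SignType.sign x : ℤ) ^ 2 + (SignType.sign x : ℤ) ≠ 0 ↔ 0 < x := by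
  rw [← sign_eq_one_iff]
  generalize SignType.sign x = e
  cases e <;> decide

theorem exists_isRoot_forall_eval_pos_iff {ι : Type*} {P : ℝ[X]} (hP : P ≠ 0) (s : Finset ι)
    (q : ι → ℝ[X]) : (∃ t, P.eval t = 0 ∧ ∀ i ∈ s, 0 < (q i).eval t) ↔
      ∑ t ∈ P.roots.toFinset, ∏ i ∈ s, ((SignType.sign ((q i).eval t) : ℤ) ^ 2
        + (SignType.sign ((q i).eval t) : ℤ)) ≠ 0 := by
  rw [Ne, Finset.sum_eq_zero_iff_of_nonneg fun t _ =>
    Finset.prod_nonneg fun i _ => sign_sq_add_sign_nonneg _]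
  push Not
  simp only [Finset.prod_ne_zero_iff, sign_sq_add_sign_ne_zero_iff, Multiset.mem_toFinset,
    Polynomial.mem_roots hP, Polynomial.IsRoot]

namespace SignDetermined

variable {Y A ι : Type*} [CommRing A] {ev : Y → A →+* ℝ}

theorem natDegree_sign_leadingCoeff (f : A[X]) : SignDetermined ev fun x =>
    ((f.map (ev x)).natDegree, SignType.sign (f.map (ev x)).leadingCoeff) := by
  classical
  refine ⟨f.support.image f.coeff, fun x y h => ?_⟩
  have hcoeff : ∀ i, SignType.sign ((f.map (ev x)).coeff i)
      = SignType.sign ((f.map (ev y)).coeff i) := fun i => by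
    rw [Polynomial.coeff_map, Polynomial.coeff_map]
    by_cases hi : i ∈ f.support
    · exact h _ (Finset.mem_image_of_mem _ hi)
    · rw [Polynomial.notMem_support_iff.1 hi, (ev x).map_zero, (ev y).map_zero]
  have hsupp : (f.map (ev x)).support = (f.map (ev y)).support := by
    ext i
    rw [Polynomial.mem_support_iff, Polynomial.mem_support_iff, ← sign_ne_zero, hcoeff,
      sign_ne_zero]
  have hdeg : (f.map (ev x)).natDegree = (f.map (ev y)).natDegree := by
    rw [Polynomial.natDegree, Polynomial.degree, hsupp]; rfl
  exact Prod.ext hdeg (by simp only [Polynomial.leadingCoeff, hcoeff, hdeg])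

theorem leadingCoeff_pos (f : A[X]) : SignDetermined ev fun x => 0 < (f.map (ev x)).leadingCoeff :=
  ((natDegree_sign_leadingCoeff f).comp (·.2 = 1)).congr_iff fun _ => sign_eq_one_iff.symm

theorem map_eq_zero (f : A[X]) : SignDetermined ev fun x => f.map (ev x) = 0 :=
  ((natDegree_sign_leadingCoeff f).comp (·.2 = 0)).congr_iff fun _ => by
    rw [sign_eq_zero_iff, Polynomial.leadingCoeff_eq_zero]

theorem totalJump (f : A[X]) : SignDetermined ev fun x => totalJump (f.map (ev x)) :=
  (natDegree_sign_leadingCoeff f).comp fun d => (1 - (-1) ^ d.1) * (d.2 : ℤ)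

/-- Pseudo-division makes the Euclidean algorithm that computes the Cauchy index uniform in the
coefficients. -/
theorem cauchyIndex (P Q : A[X]) :
    SignDetermined ev fun x => cauchyIndex (P.map (ev x)) (Q.map (ev x)) := by
  classical
  induction hd : Q.degree using WellFoundedLT.induction generalizing P Q with
  | ind d ih =>
  rcases eq_or_ne Q 0 with rfl | hQ
  · exact (const 0).congr fun x => by rw [Polynomial.map_zero, cauchyIndex_zero_right]
  obtain ⟨e, S, R, hSR, hR⟩ := exists_C_leadingCoeff_pow_mul_eq hQ P
  refine (ite (eq_zero Q.leadingCoeff) (ih _ (hd ▸ Polynomial.degree_eraseLead_lt hQ) P _ rfl)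
    (map₂ (· - ·) (totalJump (P * Q))
      (map₂ (fun (s : SignType) c => (s : ℤ) * c) (sign (Q.leadingCoeff ^ e))
        (ih _ (hd ▸ hR) Q R rfl)))).congr fun x => ?_
  split_ifs with hx
  · rw [← Q.eraseLead_add_monomial_natDegree_leadingCoeff, Polynomial.map_add]
    simp [hx]
  · have hmap := congrArg (Polynomial.map (ev x)) hSR
    rw [Polynomial.map_mul, Polynomial.map_C, Polynomial.map_add, Polynomial.map_mul] at hmap
    rw [cauchyIndex_of_C_mul_eq (by rw [map_pow]; exact pow_ne_zero e hx) hmap, Polynomial.map_mul]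

theorem sum_roots_sign (P : A[X]) (s : Finset ι) (q : ι → A[X]) (Q : A[X]) :
    SignDetermined ev fun x => ∑ t ∈ (P.map (ev x)).roots.toFinset,
      (SignType.sign ((Q.map (ev x)).eval t) : ℤ) *
        ∏ i ∈ s, ((SignType.sign (((q i).map (ev x)).eval t) : ℤ) ^ 2
          + (SignType.sign (((q i).map (ev x)).eval t) : ℤ)) := by
  classical
  induction s using Finset.induction_on generalizing Q with
  | empty =>
    refine ((cauchyIndex P (Polynomial.derivative P * Q)).comp (· / 2)).congr fun x => ?_
    rw [Polynomial.map_mul, ← Polynomial.derivative_map, cauchyIndex_derivative_mul]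
    simp
  | insert i s hi ih =>
    refine (map₂ (· + ·) (ih (Q * q i ^ 2)) (ih (Q * q i))).congr fun x => ?_
    rw [← Finset.sum_add_distrib]
    refine Finset.sum_congr rfl fun t _ => ?_
    rw [Finset.prod_insert hi]
    simp only [Polynomial.map_mul, Polynomial.map_pow, Polynomial.eval_mul, Polynomial.eval_pow,
      sign_mul, sign_pow, SignType.coe_mul, SignType.coe_pow]
    ring

theorem exists_isRoot_forall_pos (P : A[X]) (s : Finset ι) (q : ι → A[X]) :
    SignDetermined ev fun x => P.map (ev x) ≠ 0 ∧
      ∃ t, (P.map (ev x)).eval t = 0 ∧ ∀ i ∈ s, 0 < ((q i).map (ev x)).eval t := by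
  refine ((map_eq_zero P).not.and ((sum_roots_sign P s q 1).comp (· ≠ 0))).congr_iff fun x =>
    and_congr_right fun hP => (exists_isRoot_forall_eval_pos_iff hP s _).trans ?_
  simp

theorem exists_forall_pos (s : Finset ι) (q : ι → A[X]) :
    SignDetermined ev fun x => ∃ t, ∀ i ∈ s, 0 < ((q i).map (ev x)).eval t := by
  refine ((forall_mem s fun i => leadingCoeff_pos (q i)).or
    ((forall_mem s fun i => leadingCoeff_pos ((q i).comp (-Polynomial.X))).or
      (exists_isRoot_forall_pos (Polynomial.derivative (∏ i ∈ s, q i)) s q))).congr_iff fun x => ?_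
  rw [exists_forall_eval_pos_iff, ← Polynomial.map_prod, Polynomial.derivative_map]
  simp only [Polynomial.map_comp, Polynomial.map_neg, Polynomial.map_X]

theorem exists_eq_zero_forall_pos (P : A[X]) (s : Finset ι) (q : ι → A[X]) :
    SignDetermined ev fun x => ∃ t, (P.map (ev x)).eval t = 0 ∧
      ∀ i ∈ s, 0 < ((q i).map (ev x)).eval t := by
  refine ((exists_isRoot_forall_pos P s q).or
    ((map_eq_zero P).and (exists_forall_pos s q))).congr_iff fun x => ?_
  by_cases hP : P.map (ev x) = 0 <;> simp [hP]

end SignDetermined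

section TarskiSeidenberg

universe u

variable {Y : Type*} {A : Type*} [CommRing A]

/-- Evaluation of polynomials over `A` at the points of `Y × ℝ`, the coefficients being evaluated
by `ev`. -/
noncomputable def polyPoint (ev : Y → A →+* ℝ) (z : Y × ℝ) : A[X] →+* ℝ :=
  Polynomial.eval₂RingHom (ev z.1) z.2

theorem polyPoint_apply (ev : Y → A →+* ℝ) (z : Y × ℝ) (f : A[X]) :
    polyPoint ev z f = (f.map (ev z.1)).eval z.2 :=
  (Polynomial.eval_map (ev z.1) z.2).symm

/-- Evaluation of multivariate polynomials over `A` at the points of `Y × (τ → ℝ)`, the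
coefficients being evaluated by `ev`. -/
noncomputable def mvPoint {τ : Type*} (ev : Y → A →+* ℝ) (z : Y × (τ → ℝ)) :
    MvPolynomial τ A →+* ℝ :=
  eval₂Hom (ev z.1) z.2

namespace SignDetermined

variable {ev : Y → A →+* ℝ}

theorem exists_sign_eq {ι : Type*} [Finite ι] (q : ι → A[X]) (ε : ι → SignType) :
    SignDetermined ev fun x => ∃ t, ∀ i, SignType.sign (polyPoint ev (x, t) (q i)) = ε i := by
  classical
  cases nonempty_fintype ι
  set zeros := Finset.univ.filter fun i => ε i = 0
  set nonzeros := Finset.univ.filter fun i => ε i ≠ 0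
  refine (exists_eq_zero_forall_pos (∑ i ∈ zeros, q i ^ 2) nonzeros
    fun i => if ε i = 1 then q i else -q i).congr_iff fun x => exists_congr fun t => ?_
  have hzeros : (Polynomial.map (ev x) (∑ i ∈ zeros, q i ^ 2)).eval t = 0 ↔
      ∀ i, ε i = 0 → ((q i).map (ev x)).eval t = 0 := by
    rw [Polynomial.map_sum, Polynomial.eval_finsetSum,
      Finset.sum_eq_zero_iff_of_nonneg fun i _ => by
        rw [Polynomial.map_pow, Polynomial.eval_pow]; positivity]
    simp [zeros]
  rw [hzeros]
  simp only [nonzeros, Finset.mem_filter, Finset.mem_univ, true_and, ← forall_and, polyPoint_apply]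
  refine forall_congr' fun i => ?_
  generalize ε i = e
  cases e
  · simp [sign_eq_zero_iff]
  · simp [sign_eq_neg_one_iff]
  · simp [sign_eq_one_iff]

theorem exists_real {p : Y × ℝ → Prop} (hp : SignDetermined (polyPoint ev) p) :
    SignDetermined ev fun x => ∃ t, p (x, t) := by
  classical
  obtain ⟨s, hs⟩ := hp
  have hsigns : SignDetermined ev fun x (ε : s → SignType) =>
      ∃ t, ∀ a : s, SignType.sign (polyPoint ev (x, t) a) = ε a :=
    pi fun ε => exists_sign_eq _ ε
  refine (hsigns.comp fun realized => ∃ ε, realized ε ∧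
    ∃ z, p z ∧ ∀ a : s, SignType.sign (polyPoint ev z a) = ε a).congr_iff fun x => ?_
  constructor
  · rintro ⟨t, ht⟩
    exact ⟨_, ⟨t, fun _ => rfl⟩, _, ht, fun _ => rfl⟩
  · rintro ⟨ε, ⟨t, ht⟩, z, hz, hzε⟩
    exact ⟨t, (hs _ z fun a ha => (ht ⟨a, ha⟩).trans (hzε ⟨a, ha⟩).symm).mpr hz⟩

theorem exists_pi {τ : Type u} [Finite τ] {p : Y × (τ → ℝ) → Prop}
    (hp : SignDetermined (mvPoint ev) p) : SignDetermined ev fun x => ∃ v, p (x, v) := by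
  induction τ using Finite.induction_empty_option with
  | of_equiv e ih =>
    refine (ih (hp.comap (fun z => (z.1, z.2 ∘ e.symm)) (rename e.symm).toRingHom fun z =>
      ringHom_ext (fun a => ?_) fun i => ?_)).congr_iff fun x => ?_
    · simp [mvPoint]
    · simp [mvPoint]
    · exact (e.symm.arrowCongr (Equiv.refl ℝ)).exists_congr_left
  | h_empty =>
    refine (hp.comap (fun x => (x, PEmpty.elim)) (eval₂Hom (RingHom.id A) PEmpty.elim) fun x =>
      ringHom_ext (fun a => ?_) fun i => i.elim).congr_iff fun x => ?_
    · simp [mvPoint]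
    · exact ⟨fun ⟨v, hv⟩ => by rwa [Subsingleton.elim PEmpty.elim v], fun h => ⟨_, h⟩⟩
  | h_option ih =>
    refine (ih (exists_real (hp.comap (fun z => (z.1.1, fun o => o.elim z.2 z.1.2))
      (optionEquivLeft A _).toRingHom fun z => ringHom_ext (fun a => ?_) fun i => ?_))).congr_iff
      fun x => ?_
    · simp [mvPoint, polyPoint]
    · cases i <;> simp [mvPoint, polyPoint]
    · constructor
      · rintro ⟨v, hv⟩
        refine ⟨v ∘ some, v none, ?_⟩
        rwa [show (fun o : Option _ => o.elim (v none) (v ∘ some)) = v from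
          funext fun o => by cases o <;> rfl]
      · rintro ⟨v, t, hv⟩
        exact ⟨_, hv⟩

end SignDetermined

/-- A predicate on `ℝ^σ` is semialgebraic if it is determined by the signs of finitely many real
polynomials. -/
def IsSemialgebraic {σ : Type*} (p : (σ → ℝ) → Prop) : Prop :=
  SignDetermined (fun x => (eval x : MvPolynomial σ ℝ →+* ℝ)) p

end TarskiSeidenberg

section Growth

theorem eventually_sign_eval_eq_sign_eval {f : ℝ[X]} {t : ℝ} (h : f ≠ 0 → f.eval t ≠ 0) :
    ∀ᶠ u in 𝓝 t, SignType.sign (f.eval u) = SignType.sign (f.eval t) := by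
  obtain rfl | hf := eq_or_ne f 0
  · simp
  · have hcont := f.continuous.continuousAt (x := t)
    rcases lt_or_gt_of_ne (h hf) with hlt | hgt
    · filter_upwards [hcont.eventually_lt_const hlt] with u hu
      rw [sign_neg hu, sign_neg hlt]
    · filter_upwards [hcont.eventually_const_lt hgt] with u hu
      rw [sign_pos hu, sign_pos hgt]

theorem exists_isRoot_sSup {S : Set ℝ} (s : Finset ℝ[X])
    (hs : ∀ t u, (∀ f ∈ s, SignType.sign (f.eval t) = SignType.sign (f.eval u)) → (t ∈ S ↔ u ∈ S))
    (hne : S.Nonempty) (hbdd : BddAbove S) : ∃ f ∈ s, f ≠ 0 ∧ f.IsRoot (sSup S) := by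
  by_contra! hroot
  have hloc : ∀ᶠ t in 𝓝 (sSup S), (t ∈ S ↔ sSup S ∈ S) :=
    ((Filter.eventually_all_finset s).2 fun f hf =>
      eventually_sign_eval_eq_sign_eval (hroot f hf)).mono fun t ht => hs t _ ht
  have hmem : sSup S ∈ S := by
    obtain ⟨t, htS, ht⟩ := ((mem_closure_iff_frequently.1
      (csSup_mem_closure hne hbdd)).and_eventually hloc).exists
    exact ht.1 htS
  obtain ⟨t, ht, hlt⟩ := ((hloc.filter_mono nhdsWithin_le_nhds).and
    (self_mem_nhdsWithin : Set.Ioi (sSup S) ∈ 𝓝[>] sSup S)).exists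
  exact not_le.2 hlt (le_csSup hbdd (ht.2 hmem))

theorem exists_forall_isRoot_lt_pow_add_one (W : ℝ[X][X]) : ∃ r₀, ∀ r ≥ r₀, ∀ᶠ t in atTop, ∀ a : ℝ,
    W.map (Polynomial.evalRingHom t) ≠ 0 → (W.map (Polynomial.evalRingHom t)).IsRoot a →
      a < t ^ r + 1 := by
  obtain rfl | hW := eq_or_ne W 0
  · simp
  have hlead : W.leadingCoeff ≠ 0 := Polynomial.leadingCoeff_ne_zero.2 hW
  refine ⟨(Finset.range W.natDegree).sup (fun j => (W.coeff j).natDegree) + 1, fun r hr => ?_⟩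
  have hcoeff : ∀ᶠ t in atTop, ∀ j ∈ Finset.range W.natDegree,
      ‖(W.coeff j).eval t‖ ≤ ‖t ^ r * W.leadingCoeff.eval t‖ := by
    refine (Filter.eventually_all_finset _).2 fun j hj => ?_
    have hlt : (W.coeff j).degree < (Polynomial.X ^ r * W.leadingCoeff).degree := by
      have hsup := Finset.le_sup (f := fun j => (W.coeff j).natDegree) hj
      refine Polynomial.degree_lt_degree ?_
      rw [Polynomial.natDegree_X_pow_mul _ hlead]
      lia
    simpa using (Polynomial.isLittleO_atTop_of_degree_lt _ _ hlt).eventuallyLE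
  filter_upwards [hcoeff, eventually_ge_atTop 0, W.leadingCoeff.eventually_atTop_not_isRoot hlead]
    with t ht ht0 hnot a hmap ha
  have hlc : (W.map (Polynomial.evalRingHom t)).leadingCoeff = W.leadingCoeff.eval t :=
    Polynomial.leadingCoeff_map_of_leadingCoeff_ne_zero _ hnot
  have hbound : ((W.map (Polynomial.evalRingHom t)).cauchyBound : ℝ) ≤ t ^ r + 1 := by
    lift t to NNReal using ht0
    norm_cast
    refine add_le_add_left ((div_le_iff₀ (nnnorm_pos.2 (hlc ▸ hnot))).2 ?_) _
    rw [Polynomial.natDegree_map_of_leadingCoeff_ne_zero (Polynomial.evalRingHom _) hnot,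
      hlc]
    refine Finset.sup_le fun j hj => ?_
    simpa [← NNReal.coe_le_coe] using ht j hj
  exact (le_abs_self a).trans_lt
    ((NNReal.coe_lt_coe.2 (Polynomial.IsRoot.norm_lt_cauchyBound hmap ha)).trans_le hbound)

theorem exists_le_mul_one_add_abs_pow_of_forall_fst {D : ℝ × ℝ → Prop}
    (hD : SignDetermined (polyPoint fun t => Polynomial.evalRingHom t) D)
    (hbdd : ∀ R, ∃ B, ∀ t a, D (t, a) → t ≤ R → a ≤ B) :
    ∃ (K : ℝ) (r : ℕ), ∀ t a, D (t, a) → a ≤ K * (1 + |t|) ^ r := by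
  classical
  obtain ⟨s, hs⟩ := hD
  choose r₀ hr₀ using exists_forall_isRoot_lt_pow_add_one
  set r := s.sup r₀
  obtain ⟨T, hT⟩ := eventually_atTop.1 ((Filter.eventually_all_finset s).2 fun W hW =>
    hr₀ W r (Finset.le_sup hW))
  obtain ⟨B, hB⟩ := hbdd T
  refine ⟨|B| + 2, r, fun t a ha => ?_⟩
  have hone : 1 ≤ (1 + |t|) ^ r := one_le_pow₀ (le_add_of_nonneg_right (abs_nonneg t))
  rcases le_total t T with htT | hTt
  · nlinarith [hB t a ha htT, le_abs_self B, abs_nonneg B]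
  have hbddt : BddAbove {a | D (t, a)} :=
    let ⟨B', hB'⟩ := hbdd t
    ⟨B', fun a ha => hB' t a ha le_rfl⟩
  obtain ⟨f, hf, hf0, hroot⟩ := exists_isRoot_sSup (S := {a | D (t, a)})
    (s.image fun W => W.map (Polynomial.evalRingHom t))
    (fun a b hab => iff_of_eq <| hs (t, a) (t, b) fun W hW => by
      simpa only [polyPoint_apply] using hab _ (Finset.mem_image_of_mem _ hW)) ⟨a, ha⟩ hbddt
  obtain ⟨W, hW, rfl⟩ := Finset.mem_image.1 hf
  have hpow : t ^ r ≤ (1 + |t|) ^ r :=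
    (le_abs_self _).trans (abs_pow t r ▸ pow_le_pow_left₀ (abs_nonneg t) (by linarith) r)
  calc a ≤ sSup {a | D (t, a)} := le_csSup hbddt ha
    _ ≤ t ^ r + 1 := (hT t hTt W hW _ hf0 hroot).le
    _ ≤ (|B| + 2) * (1 + |t|) ^ r := by nlinarith [abs_nonneg B]

/-- The image of `S` under `(Q, P)` is semialgebraic in the plane, and there the least upper bound
of a vertical section is a root of one of finitely many polynomials. -/
theorem IsSemialgebraic.exists_le_mul_one_add_abs_pow {σ : Type*} [Finite σ] {S : (σ → ℝ) → Prop}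
    (hS : IsSemialgebraic S) (P Q : MvPolynomial σ ℝ)
    (hbdd : ∀ R, ∃ B, ∀ v, S v → eval v Q ≤ R → eval v P ≤ B) :
    ∃ (K : ℝ) (r : ℕ), ∀ v, S v → eval v P ≤ K * (1 + |eval v Q|) ^ r := by
  set coeffs : ℝ →+* ℝ[X][X] := (Polynomial.C (R := ℝ[X])).comp Polynomial.C
  set ev := mvPoint (τ := σ) (polyPoint fun t : ℝ => Polynomial.evalRingHom t) with hev
  have heval (z) (f : MvPolynomial σ ℝ) : ev z (map coeffs f) = eval z.2 f := by
    simp only [hev, mvPoint, coe_eval₂Hom, eval₂_map]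
    congr 1
    ext a
    simp [coeffs, polyPoint]
  have hfst : SignDetermined ev fun z => eval z.2 Q = z.1.1 := by
    refine (SignDetermined.eq_zero
      (map coeffs Q - C (Polynomial.C Polynomial.X : ℝ[X][X]))).congr_iff fun z => ?_
    rw [map_sub, heval, sub_eq_zero]
    simp [hev, mvPoint, polyPoint]
  have hsnd : SignDetermined ev fun z => eval z.2 P = z.1.2 := by
    refine (SignDetermined.eq_zero
      (map coeffs P - C (Polynomial.X : ℝ[X][X]))).congr_iff fun z => ?_
    rw [map_sub, heval, sub_eq_zero]
    simp [hev, mvPoint, polyPoint]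
  have hplane : SignDetermined (polyPoint fun t => Polynomial.evalRingHom t)
      fun z => ∃ v, S v ∧ eval v Q = z.1 ∧ eval v P = z.2 :=
    ((hS.comap Prod.snd _ fun z => RingHom.ext fun f => (heval z f).symm).and
      (hfst.and hsnd)).exists_pi
  obtain ⟨K, r, hK⟩ := exists_le_mul_one_add_abs_pow_of_forall_fst hplane fun R =>
    let ⟨B, hB⟩ := hbdd R
    ⟨B, by rintro t a ⟨v, hv, rfl, rfl⟩ ht; exact hB v hv ht⟩
  exact ⟨K, r, fun v hv => hK _ _ ⟨v, hv, rfl, rfl⟩⟩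

end Growth

section Lojasiewicz

variable {ι : Type*} {F : Set (ι → ℝ)} {g h : (ι → ℝ) → ℝ} {pg qg p q : MvPolynomial ι ℝ}

theorem dense_setOf_eval_ne_zero [Finite ι] (hq : q ≠ 0) :
    Dense {x : ι → ℝ | eval x q ≠ 0} := by
  cases nonempty_fintype ι
  intro x
  by_contra hx
  obtain ⟨ε, hε, hball⟩ := Metric.mem_nhds_iff.1 (isClosed_closure.isOpen_compl.mem_nhds hx)
  refine hq (funext_set (fun i => Metric.ball (x i) ε)
    (fun i => infinite_of_mem_nhds (x i) (Metric.ball_mem_nhds _ hε)) fun y hy => ?_)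
  rw [map_zero]
  by_contra hne
  exact hball (ball_pi x hε ▸ hy) (subset_closure hne)

section Fintype

variable [Fintype ι]

/-- The points `(x, y, z, s)` where `z` bounds the reciprocal distance of `x` to `F` and, for
`g = pg / qg` and `h = p / q`, one has `y = 1 / g x` and `s = (h x)²`. -/
def reciprocalGraph (F : Set (ι → ℝ)) (pg qg p q : MvPolynomial ι ℝ) : Set (ι ⊕ Fin 3 → ℝ) :=
  {v | (∀ w ∈ F, 1 ≤ v (.inr 1) ^ 2 * ∑ i, (v (.inl i) - w i) ^ 2) ∧
    eval (v ∘ .inl) (qg * q) ≠ 0 ∧ v (.inr 0) * eval (v ∘ .inl) pg = eval (v ∘ .inl) qg ∧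
    v (.inr 2) * eval (v ∘ .inl) q ^ 2 = eval (v ∘ .inl) p ^ 2}

theorem isSemialgebraic_forall_one_le (hF : IsSemialgebraic (· ∈ F)) :
    IsSemialgebraic fun v : ι ⊕ Fin 3 → ℝ =>
      ∀ w ∈ F, 1 ≤ v (.inr 1) ^ 2 * ∑ i, (v (.inl i) - w i) ^ 2 := by
  set ev : (ι ⊕ Fin 3 → ℝ) × (ι → ℝ) → MvPolynomial ι (MvPolynomial (ι ⊕ Fin 3) ℝ) →+* ℝ :=
    mvPoint fun v => eval v with hev
  have hmem : SignDetermined ev fun z => z.2 ∈ F :=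
    hF.comap Prod.snd (map C) fun z => ringHom_ext (by simp [hev, mvPoint])
      (by simp [hev, mvPoint])
  have hlt : SignDetermined ev fun z : (ι ⊕ Fin 3 → ℝ) × (ι → ℝ) =>
      z.1 (.inr 1) ^ 2 * ∑ i, (z.1 (.inl i) - z.2 i) ^ 2 < 1 :=
    (SignDetermined.pos (ev := ev) (1 - C (X (.inr 1)) ^ 2 * ∑ i, (C (X (.inl i)) - X i) ^ 2)
      ).congr_iff fun z => by simp [hev, mvPoint]
  exact (hmem.and hlt).exists_pi.not.congr_iff fun v => by simp

theorem isSemialgebraic_reciprocalGraph (hF : IsSemialgebraic (· ∈ F))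
    (pg qg p q : MvPolynomial ι ℝ) : IsSemialgebraic (· ∈ reciprocalGraph F pg qg p q) := by
  have hcomap {f : (ι → ℝ) → Prop} (hf : IsSemialgebraic f) :
      IsSemialgebraic fun v : ι ⊕ Fin 3 → ℝ => f (v ∘ .inl) :=
    hf.comap _ (rename Sum.inl).toRingHom fun v =>
      RingHom.ext fun a => (eval_rename _ v a).symm
  refine (isSemialgebraic_forall_one_le hF).and (.and ?_ (.and ?_ ?_))
  · exact (hcomap (.eq_zero (qg * q))).not
  · exact (SignDetermined.eq_zero (X (.inr 0) * rename .inl pg - rename .inl qg)).congr_iff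
      fun v => by simp [eval_rename, sub_eq_zero]
  · exact (SignDetermined.eq_zero (X (.inr 2) * rename .inl q ^ 2 - rename .inl p ^ 2)).congr_iff
      fun v => by simp [eval_rename, sub_eq_zero]

theorem eq_one_and_eq_sq_of_mem_reciprocalGraph
    (hg : ∀ x ∈ Fᶜ, eval x qg * g x = eval x pg)
    (hh : ∀ x ∈ Fᶜ ∩ {x | g x ≠ 0}, eval x q * h x = eval x p) {v : ι ⊕ Fin 3 → ℝ}
    (hv : v ∈ reciprocalGraph F pg qg p q) :
    v ∘ .inl ∈ Fᶜ ∧ v (.inr 0) * g (v ∘ .inl) = 1 ∧ v (.inr 2) = h (v ∘ .inl) ^ 2 := by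
  obtain ⟨hdist, hne, hy, hs⟩ := hv
  rw [map_mul, mul_ne_zero_iff] at hne
  have hx : v ∘ .inl ∈ Fᶜ := fun hx => by
    have h0 := hdist _ hx
    simp only [Function.comp_apply, sub_self] at h0
    norm_num at h0
  have hone : v (.inr 0) * g (v ∘ .inl) = 1 := by
    rw [← hg _ hx] at hy
    exact mul_left_cancel₀ hne.1 (by linarith)
  refine ⟨hx, hone, mul_right_cancel₀ (pow_ne_zero 2 hne.2) ?_⟩
  rw [hs, ← hh _ ⟨hx, right_ne_zero_of_mul_eq_one hone⟩, mul_pow, mul_comm]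

/-- A polynomial whose boundedness confines the points of `reciprocalGraph` to a compact set. -/
noncomputable def reciprocalGauge (ι : Type*) [Fintype ι] : MvPolynomial (ι ⊕ Fin 3) ℝ :=
  1 + ∑ i, X (.inl i) ^ 2 + X (.inr 0) ^ 2 + X (.inr 1) ^ 2

theorem eval_reciprocalGauge (v : ι ⊕ Fin 3 → ℝ) : eval v (reciprocalGauge ι) =
    1 + ∑ i, v (.inl i) ^ 2 + v (.inr 0) ^ 2 + v (.inr 1) ^ 2 := by
  simp [reciprocalGauge]

theorem sq_le_sum_sq (x : ι → ℝ) (i : ι) : x i ^ 2 ≤ ∑ i, x i ^ 2 :=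
  Finset.single_le_sum (f := fun i => x i ^ 2) (fun _ _ => sq_nonneg _) (Finset.mem_univ i)

theorem isCompact_setOf_sum_sq_le_inter (hg : ContinuousOn g Fᶜ) (R : ℝ) :
    IsCompact ({x | ∑ i, x i ^ 2 ≤ R ∧ ∀ w ∈ F, 1 ≤ R * ∑ i, (x i - w i) ^ 2} ∩
      g ⁻¹' {a | 1 ≤ R * a ^ 2}) := by
  have hclosed :
      IsClosed {x : ι → ℝ | ∑ i, x i ^ 2 ≤ R ∧ ∀ w ∈ F, 1 ≤ R * ∑ i, (x i - w i) ^ 2} := by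
    refine (isClosed_le (by fun_prop) (by fun_prop)).and ?_
    simp only [Set.ofPred_forall]
    exact isClosed_iInter fun w => isClosed_iInter fun _ => isClosed_le (by fun_prop) (by fun_prop)
  have hsub : {x : ι → ℝ | ∑ i, x i ^ 2 ≤ R ∧ ∀ w ∈ F, 1 ≤ R * ∑ i, (x i - w i) ^ 2} ⊆ Fᶜ := by
    intro x hx hxF
    have h0 := hx.2 x hxF
    simp only [sub_self] at h0
    norm_num at h0
  refine Metric.isCompact_of_isClosed_isBounded ((hg.mono hsub).preimage_isClosed_of_isClosed
    hclosed (isClosed_le (by fun_prop) (by fun_prop))) ?_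
  refine (Metric.isBounded_closedBall (x := 0) (r := √R)).subset fun x hx => ?_
  rw [mem_closedBall_zero_iff, pi_norm_le_iff_of_nonneg (Real.sqrt_nonneg _)]
  exact fun i => Real.abs_le_sqrt ((sq_le_sum_sq x i).trans hx.1.1)

theorem exists_forall_mem_reciprocalGraph_le (hgc : ContinuousOn g Fᶜ)
    (hhc : ContinuousOn h (Fᶜ ∩ {x | g x ≠ 0}))
    (hg : ∀ x ∈ Fᶜ, eval x qg * g x = eval x pg)
    (hh : ∀ x ∈ Fᶜ ∩ {x | g x ≠ 0}, eval x q * h x = eval x p) (R : ℝ) :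
    ∃ B, ∀ v ∈ reciprocalGraph F pg qg p q, eval v (reciprocalGauge ι) ≤ R → v (.inr 2) ≤ B := by
  have hcompl : {x | ∑ i, x i ^ 2 ≤ R ∧ ∀ w ∈ F, 1 ≤ R * ∑ i, (x i - w i) ^ 2} ∩
      g ⁻¹' {a | 1 ≤ R * a ^ 2} ⊆ Fᶜ ∩ {x | g x ≠ 0} := by
    refine fun x ⟨⟨_, hdist⟩, hgx⟩ => ⟨fun hxF => ?_, fun hg0 => ?_⟩
    · have h0 := hdist x hxF
      norm_num at h0
    · have h0 : 1 ≤ R * g x ^ 2 := hgx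
      norm_num [hg0] at h0
  obtain ⟨B, hB⟩ := (isCompact_setOf_sum_sq_le_inter hgc R).exists_bound_of_continuousOn
    (hhc.mono hcompl)
  refine ⟨B ^ 2, fun v hv hvR => ?_⟩
  rw [eval_reciprocalGauge] at hvR
  obtain ⟨-, hone, hs⟩ := eq_one_and_eq_sq_of_mem_reciprocalGraph hg hh hv
  have hsum : 0 ≤ ∑ i, v (.inl i) ^ 2 := Finset.sum_nonneg fun _ _ => sq_nonneg _
  have hy := sq_nonneg (v (.inr 0))
  have hz := sq_nonneg (v (.inr 1))
  rw [hs, ← sq_abs]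
  refine pow_le_pow_left₀ (abs_nonneg _) (hB _ ⟨⟨?_, fun w hw => ?_⟩, ?_⟩) 2
  · simp only [Function.comp_apply]
    linarith
  · exact (hv.1 w hw).trans (mul_le_mul_of_nonneg_right (by linarith)
      (Finset.sum_nonneg fun _ _ => sq_nonneg _))
  · calc 1 = v (.inr 0) ^ 2 * g (v ∘ .inl) ^ 2 := by rw [← mul_pow, hone, one_pow]
      _ ≤ R * g (v ∘ .inl) ^ 2 := mul_le_mul_of_nonneg_right (by linarith) (sq_nonneg _)

theorem elim_mem_reciprocalGraph (hg : ∀ x ∈ Fᶜ, eval x qg * g x = eval x pg)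
    (hh : ∀ x ∈ Fᶜ ∩ {x | g x ≠ 0}, eval x q * h x = eval x p) {x : ι → ℝ} (hx : x ∈ Fᶜ)
    (hgx : g x ≠ 0) (hne : eval x (qg * q) ≠ 0) {z : ℝ}
    (hz : ∀ w ∈ F, 1 ≤ z ^ 2 * ∑ i, (x i - w i) ^ 2) :
    Sum.elim x ![(g x)⁻¹, z, h x ^ 2] ∈ reciprocalGraph F pg qg p q := by
  refine ⟨hz, hne, ?_, ?_⟩
  · simp only [Sum.elim_inr, Sum.elim_comp_inl, Matrix.cons_val_zero]
    rw [← hg x hx, mul_comm, mul_inv_cancel_right₀ hgx]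
  · simp only [Sum.elim_inr, Sum.elim_comp_inl, Matrix.cons_val]
    rw [← hh x ⟨hx, hgx⟩, mul_pow, mul_comm]

theorem exists_sq_mul_pow_le (hF : IsSemialgebraic (· ∈ F)) (hgc : ContinuousOn g Fᶜ)
    (hhc : ContinuousOn h (Fᶜ ∩ {x | g x ≠ 0})) (hg : ∀ x ∈ Fᶜ, eval x qg * g x = eval x pg)
    (hh : ∀ x ∈ Fᶜ ∩ {x | g x ≠ 0}, eval x q * h x = eval x p) :
    ∃ (K : ℝ) (r : ℕ), ∀ x ∈ Fᶜ, g x ≠ 0 → eval x (qg * q) ≠ 0 → ∀ z : ℝ,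
      (∀ w ∈ F, 1 ≤ z ^ 2 * ∑ i, (x i - w i) ^ 2) →
      h x ^ 2 * g x ^ (2 * r) ≤ K * ((2 + ∑ i, x i ^ 2 + z ^ 2) * g x ^ 2 + 1) ^ r := by
  obtain ⟨K, r, hK⟩ := (isSemialgebraic_reciprocalGraph hF pg qg p q).exists_le_mul_one_add_abs_pow
    (X (.inr 2)) (reciprocalGauge ι) (by
      simpa only [eval_X] using exists_forall_mem_reciprocalGraph_le hgc hhc hg hh)
  refine ⟨K, r, fun x hx hgx hne z hz => ?_⟩
  have hgauge : eval (Sum.elim x ![(g x)⁻¹, z, h x ^ 2]) (reciprocalGauge ι) =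
      1 + ∑ i, x i ^ 2 + (g x)⁻¹ ^ 2 + z ^ 2 := by
    simp [eval_reciprocalGauge]
  have hle := hK _ (elim_mem_reciprocalGraph hg hh hx hgx hne hz)
  rw [hgauge, abs_of_nonneg (by positivity), eval_X] at hle
  calc h x ^ 2 * g x ^ (2 * r)
      ≤ K * (1 + (1 + ∑ i, x i ^ 2 + (g x)⁻¹ ^ 2 + z ^ 2)) ^ r * g x ^ (2 * r) :=
        mul_le_mul_of_nonneg_right hle (pow_mul (g x) 2 r ▸ by positivity)
    _ = K * ((2 + ∑ i, x i ^ 2 + z ^ 2) * g x ^ 2 + 1) ^ r := by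
        rw [pow_mul, mul_assoc, ← mul_pow]
        field_simp
        ring

theorem exists_eventually_forall_one_le (hF : IsClosed F) {x₀ : ι → ℝ} (hx₀ : x₀ ∈ Fᶜ) :
    ∃ z : ℝ, ∀ᶠ x in 𝓝 x₀, ∀ w ∈ F, 1 ≤ z ^ 2 * ∑ i, (x i - w i) ^ 2 := by
  obtain ⟨ρ, hρ, hball⟩ := Metric.isOpen_iff.1 hF.isOpen_compl x₀ hx₀
  refine ⟨2 / ρ, ?_⟩
  filter_upwards [Metric.ball_mem_nhds x₀ (half_pos hρ)] with x hx w hw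
  have hdist : ρ / 2 ≤ dist x w := by
    by_contra! hlt
    refine hball (?_ : w ∈ _) hw
    rw [Metric.mem_ball] at hx ⊢
    linarith [dist_triangle w x x₀, dist_comm w x]
  obtain ⟨i, hi⟩ : ∃ i, ρ / 2 ≤ |x i - w i| := by
    by_contra! hlt
    exact hdist.not_gt ((dist_pi_lt_iff (half_pos hρ)).2 hlt)
  calc 1 = (2 / ρ) ^ 2 * (ρ / 2) ^ 2 := by field_simp
    _ ≤ (2 / ρ) ^ 2 * |x i - w i| ^ 2 := by gcongr
    _ = (2 / ρ) ^ 2 * (x i - w i) ^ 2 := by rw [sq_abs]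
    _ ≤ (2 / ρ) ^ 2 * ∑ i, (x i - w i) ^ 2 :=
      mul_le_mul_of_nonneg_left (sq_le_sum_sq (fun i => x i - w i) i) (sq_nonneg _)

end Fintype

theorem exists_eventually_sq_mul_pow_le [Finite ι] (hFc : IsClosed F) (hF : IsSemialgebraic (· ∈ F))
    (hqg : qg ≠ 0) (hq : q ≠ 0) (hgc : ContinuousOn g Fᶜ)
    (hhc : ContinuousOn h (Fᶜ ∩ {x | g x ≠ 0})) (hg : ∀ x ∈ Fᶜ, eval x qg * g x = eval x pg)
    (hh : ∀ x ∈ Fᶜ ∩ {x | g x ≠ 0}, eval x q * h x = eval x p) :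
    ∃ r : ℕ, ∀ x₀ ∈ Fᶜ, ∃ B : ℝ, ∀ᶠ x in 𝓝 x₀, g x ≠ 0 → h x ^ 2 * g x ^ (2 * r) ≤ B := by
  cases nonempty_fintype ι
  obtain ⟨K, r, hK⟩ := exists_sq_mul_pow_le hF hgc hhc hg hh
  refine ⟨r, fun x₀ hx₀ => ?_⟩
  obtain ⟨z, hz⟩ := exists_eventually_forall_one_le hFc hx₀
  have hU : IsOpen Fᶜ := hFc.isOpen_compl
  have hV : IsOpen (Fᶜ ∩ {x | g x ≠ 0}) := hgc.isOpen_inter_preimage hU isOpen_ne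
  have hbound : ContinuousAt
      (fun x => K * ((2 + ∑ i, x i ^ 2 + z ^ 2) * g x ^ 2 + 1) ^ r) x₀ := by
    have hgx₀ := hgc.continuousAt (hU.mem_nhds hx₀)
    have hsum : ContinuousAt (fun x : ι → ℝ => ∑ i, x i ^ 2) x₀ :=
      Continuous.continuousAt (by fun_prop)
    fun_prop
  refine ⟨K * ((2 + ∑ i, x₀ i ^ 2 + z ^ 2) * g x₀ ^ 2 + 1) ^ r + 1, ?_⟩
  filter_upwards [((hbound.eventually_lt_const (lt_add_one _)).and hz).eventually_nhds,
    hU.mem_nhds hx₀] with x hx hxU hgx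
  have hVx := hV.mem_nhds ⟨hxU, hgx⟩
  have hcont : ContinuousAt (fun x => h x ^ 2 * g x ^ (2 * r)) x :=
    ((hhc.continuousAt hVx).pow 2).mul ((hgc.continuousAt (hU.mem_nhds hxU)).pow _)
  refine le_of_tendsto_of_frequently hcont (((mem_closure_iff_frequently.1
    (dense_setOf_eval_ne_zero (mul_ne_zero hqg hq) x)).and_eventually (hx.and hVx)).mono ?_)
  rintro y ⟨hne, ⟨hlt, hzy⟩, hyU, hgy⟩
  exact (hK y hyU hgy hne z hzy).trans hlt.le

end Lojasiewicz

section Gluing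

theorem exists_mem_Ico_eq_zero_forall_Ioc_ne_zero {φ : ℝ → ℝ} {a b : ℝ} (hab : a ≤ b)
    (hφ : ContinuousOn φ (Set.Icc a b)) (ha : φ a = 0) (hb : φ b ≠ 0) :
    ∃ c ∈ Set.Ico a b, φ c = 0 ∧ ∀ t ∈ Set.Ioc c b, φ t ≠ 0 := by
  have hzeros : IsCompact (Set.Icc a b ∩ φ ⁻¹' {0}) :=
    isCompact_Icc.of_isClosed_subset
      (hφ.preimage_isClosed_of_isClosed isClosed_Icc isClosed_singleton) Set.inter_subset_left
  obtain ⟨c, ⟨hc, hφc⟩, hmax⟩ := hzeros.exists_isGreatest ⟨a, ⟨le_rfl, hab⟩, ha⟩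
  exact ⟨c, ⟨hc.1, hc.2.lt_of_ne (ne_of_apply_ne φ (by rw [show φ c = 0 from hφc]; exact hb.symm))⟩,
    hφc, fun t ht h0 => ht.1.not_ge (hmax ⟨⟨hc.1.trans ht.1.le, ht.2⟩, h0⟩)⟩

variable {E : Type*} [NormedAddCommGroup E] [NormedSpace ℝ E] {G : E → ℝ} {L : E → E →L[ℝ] ℝ}

theorem abs_le_mul_norm_sub_of_hasFDerivAt {s : Set E} (hs : Convex ℝ s) {x₀ x : E} {ε : ℝ}
    (hε : 0 ≤ ε) (hG : ContinuousOn G s) (hx₀ : x₀ ∈ s) (hG₀ : G x₀ = 0)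
    (hL : ∀ x ∈ s, G x ≠ 0 → HasFDerivAt G (L x) x ∧ ‖L x‖ ≤ ε) (hx : x ∈ s) :
    |G x| ≤ ε * ‖x - x₀‖ := by
  by_cases hGx : G x = 0
  · rw [hGx, abs_zero]
    positivity
  set γ : ℝ →ᵃ[ℝ] E := AffineMap.lineMap x₀ x with hγdef
  have hγ : ∀ t ∈ Set.Icc (0 : ℝ) 1, γ t ∈ s := fun t ht => hs.lineMap_mem hx₀ hx ht
  have hGγ : ContinuousOn (G ∘ γ) (Set.Icc 0 1) :=
    hG.comp AffineMap.lineMap_continuous.continuousOn hγ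
  obtain ⟨a, ha, hGa, hne⟩ := exists_mem_Ico_eq_zero_forall_Ioc_ne_zero zero_le_one hGγ
    (by simpa [hγdef] using hG₀) (by simpa [hγdef] using hGx)
  have hmem : ∀ t ∈ Set.Ioo a 1, γ t ∈ s ∧ G (γ t) ≠ 0 := fun t ht =>
    ⟨hγ t ⟨ha.1.trans ht.1.le, ht.2.le⟩, hne t ⟨ht.1, ht.2.le⟩⟩
  obtain ⟨c, hc, hslope⟩ := exists_hasDerivAt_eq_slope (G ∘ γ) (fun t => L (γ t) (x - x₀)) ha.2
    (hGγ.mono (Set.Icc_subset_Icc_left ha.1)) fun t ht =>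
      (hL _ (hmem t ht).1 (hmem t ht).2).1.comp_hasDerivAt t AffineMap.hasDerivAt_lineMap
  have hpos : 0 < 1 - a := sub_pos.2 ha.2
  rw [hGa, sub_zero, eq_div_iff hpos.ne'] at hslope
  calc |G x| = |L (γ c) (x - x₀)| * |1 - a| := by
        rw [← abs_mul, hslope, Function.comp_apply,
          AffineMap.lineMap_apply_one]
    _ ≤ |L (γ c) (x - x₀)| := mul_le_of_le_one_right (abs_nonneg _) (by
        rw [abs_of_pos hpos]
        linarith [ha.1])
    _ ≤ ‖L (γ c)‖ * ‖x - x₀‖ := (L (γ c)).le_opNorm _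
    _ ≤ ε * ‖x - x₀‖ := by gcongr; exact (hL _ (hmem c hc).1 (hmem c hc).2).2

theorem hasFDerivAt_of_forall_ne_zero {U : Set E} (hU : IsOpen U) (hG : ContinuousOn G U) {x₀ : E}
    (hx₀ : x₀ ∈ U) (hG₀ : G x₀ = 0) (hLc : ContinuousAt L x₀) (hL₀ : L x₀ = 0)
    (hL : ∀ x ∈ U, G x ≠ 0 → HasFDerivAt G (L x) x) : HasFDerivAt G (L x₀) x₀ := by
  rw [hL₀, hasFDerivAt_iff_isLittleO, Asymptotics.isLittleO_iff]
  intro ε hε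
  have hsmall : ∀ᶠ x in 𝓝 x₀, ‖L x‖ < ε ∧ x ∈ U :=
    (hLc.norm.eventually_lt_const (by simpa only [hL₀, norm_zero])).and (hU.mem_nhds hx₀)
  obtain ⟨δ, hδ, hball⟩ := Metric.eventually_nhds_iff_ball.1 hsmall
  filter_upwards [Metric.ball_mem_nhds x₀ hδ] with x hx
  rw [hG₀, sub_zero, zero_apply, sub_zero, Real.norm_eq_abs]
  exact abs_le_mul_norm_sub_of_hasFDerivAt (convex_ball x₀ δ) hε.le
    (hG.mono fun y hy => (hball y hy).2) (Metric.mem_ball_self hδ) hG₀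
    (fun y hy hGy => ⟨hL y (hball y hy).2 hGy, (hball y hy).1.le⟩) hx

theorem contDiffOn_succ_of_hasFDerivAt_or_eq_zero {U : Set E} (hU : IsOpen U) {k : ℕ}
    (hG : ContinuousOn G U) (hLk : ContDiffOn ℝ k L U)
    (hL : ∀ x ∈ U, HasFDerivAt G (L x) x ∨ G x = 0 ∧ L x = 0) :
    ContDiffOn ℝ (k + 1) G U := by
  have hderiv : ∀ x ∈ U, HasFDerivAt G (L x) x := by
    intro x hx
    rcases hL x hx with hGx | ⟨hGx, hLx⟩
    · exact hGx
    · exact hasFDerivAt_of_forall_ne_zero hU hG hx hGx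
        (hLk.continuousOn.continuousAt (hU.mem_nhds hx)) hLx
        fun y hy hGy => (hL y hy).resolve_right fun h0 => hGy h0.1
  rw [contDiffOn_succ_iff_fderiv_of_isOpen hU]
  exact ⟨fun x hx => (hderiv x hx).differentiableAt.differentiableWithinAt, by simp,
    hLk.congr fun x hx => (hderiv x hx).fderiv⟩

end Gluing

section IsRationalOn

variable {ι : Type*}

theorem sum_smul_proj_apply_single [Fintype ι] [DecidableEq ι] (c : ι → ℝ) (j : ι) :
    (∑ i, c i • ContinuousLinearMap.proj (R := ℝ) (φ := fun _ => ℝ) i) (Pi.single j 1) = c j := by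
  simp [Pi.single_apply]

theorem hasFDerivAt_eval [Fintype ι] (p : MvPolynomial ι ℝ) (x : ι → ℝ) :
    HasFDerivAt (fun x => eval x p)
      (∑ i, eval x (pderiv i p) • ContinuousLinearMap.proj (R := ℝ) (φ := fun _ => ℝ) i) x := by
  classical
  induction p using MvPolynomial.induction_on with
  | C a => simpa using hasFDerivAt_const a x
  | add p q hp hq =>
    simp only [map_add, add_smul, Finset.sum_add_distrib]
    exact hp.add hq
  | mul_X p j hp =>
    simp only [map_mul, eval_X]
    refine (hp.mul (hasFDerivAt_apply j x)).congr_fderiv ?_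
    ext v
    simp [pderiv_X, Pi.single_apply, Finset.mul_sum, Finset.sum_add_distrib, add_mul, mul_assoc,
      apply_ite]

variable {S T : Set (ι → ℝ)} {f g : (ι → ℝ) → ℝ}

/-- `f` agrees on `S` with the quotient of two polynomials, in the weak sense `q * f = p` which
says nothing about `f` at the zeros of the denominator `q ≠ 0`. -/
def IsRationalOn (S : Set (ι → ℝ)) (f : (ι → ℝ) → ℝ) : Prop :=
  ∃ p q : MvPolynomial ι ℝ, q ≠ 0 ∧ ∀ x ∈ S, eval x q * f x = eval x p

namespace IsRationalOn

theorem mono (hf : IsRationalOn S f) (h : T ⊆ S) : IsRationalOn T f :=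
  let ⟨p, q, hq, hpq⟩ := hf
  ⟨p, q, hq, fun x hx => hpq x (h hx)⟩

theorem mul (hf : IsRationalOn S f) (hg : IsRationalOn S g) :
    IsRationalOn S fun x => f x * g x := by
  obtain ⟨p, q, hq, h⟩ := hf
  obtain ⟨p', q', hq', h'⟩ := hg
  refine ⟨p * p', q * q', mul_ne_zero hq hq', fun x hx => ?_⟩
  rw [map_mul, map_mul, ← h x hx, ← h' x hx, mul_mul_mul_comm]

theorem fderiv_single [Finite ι] [DecidableEq ι] (hS : IsOpen S) (hf : IsRationalOn S f)
    (hd : ∀ x ∈ S, DifferentiableAt ℝ f x) (i : ι) :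
    IsRationalOn S fun x => fderiv ℝ f x (Pi.single i 1) := by
  cases nonempty_fintype ι
  obtain ⟨p, q, hq, h⟩ := hf
  refine ⟨q * pderiv i p - pderiv i q * p, q ^ 2, pow_ne_zero 2 hq, fun x hx => ?_⟩
  have hqf : (fun x => eval x q * f x) =ᶠ[𝓝 x] fun x => eval x p :=
    eventually_of_mem (hS.mem_nhds hx) h
  have hderiv := congrArg (· (Pi.single i 1))
    (((hasFDerivAt_eval q x).mul (hd x hx).hasFDerivAt).unique
      ((hasFDerivAt_eval p x).congr_of_eventuallyEq hqf))
  simp only [add_apply, smul_apply, smul_eq_mul, sum_smul_proj_apply_single] at hderiv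
  simp only [map_sub, map_mul, map_pow, ← h x hx]
  linear_combination eval x q * hderiv

end IsRationalOn

end IsRationalOn

section PowMul

variable {ι : Type*} {F : Set (ι → ℝ)} {g h : (ι → ℝ) → ℝ}

theorem exists_forall_le_continuousOn_pow_mul [Finite ι] (hFc : IsClosed F)
    (hF : IsSemialgebraic (· ∈ F)) (hg : ContinuousOn g Fᶜ) (hgr : IsRationalOn Fᶜ g)
    (hh : ContinuousOn h (Fᶜ ∩ {x | g x ≠ 0})) (hhr : IsRationalOn (Fᶜ ∩ {x | g x ≠ 0}) h) :
    ∃ M₀, ∀ M ≥ M₀, ContinuousOn (fun x => g x ^ M * h x) Fᶜ := by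
  obtain ⟨pg, qg, hqg, hpqg⟩ := hgr
  obtain ⟨p, q, hq, hpq⟩ := hhr
  obtain ⟨r, hr⟩ := exists_eventually_sq_mul_pow_le hFc hF hqg hq hg hh hpqg hpq
  have hU : IsOpen Fᶜ := hFc.isOpen_compl
  refine ⟨r + 1, fun M hM x hx => ContinuousAt.continuousWithinAt ?_⟩
  have hgx : ContinuousAt g x := hg.continuousAt (hU.mem_nhds hx)
  by_cases h0 : g x = 0
  · obtain ⟨B, hB⟩ := hr x hx
    obtain ⟨m, rfl⟩ := Nat.exists_eq_add_of_le hM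
    have hlim : Tendsto (fun x => (g x ^ (m + 1)) ^ 2 * |B|) (𝓝 x) (𝓝 0) := by
      have hcont : ContinuousAt (fun x => (g x ^ (m + 1)) ^ 2 * |B|) x := by fun_prop
      simpa [ContinuousAt, h0] using hcont
    have hsq : Tendsto (fun x => (g x ^ (r + 1 + m) * h x) ^ 2) (𝓝 x) (𝓝 0) := by
      refine squeeze_zero' (Eventually.of_forall fun _ => sq_nonneg _) ?_ hlim
      filter_upwards [hB] with y hy
      by_cases hgy : g y = 0
      · simp [hgy]
      · calc (g y ^ (r + 1 + m) * h y) ^ 2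
            = (g y ^ (m + 1)) ^ 2 * (h y ^ 2 * g y ^ (2 * r)) := by ring
          _ ≤ (g y ^ (m + 1)) ^ 2 * |B| :=
            mul_le_mul_of_nonneg_left ((hy hgy).trans (le_abs_self _)) (sq_nonneg _)
    rw [ContinuousAt, h0, zero_pow (by omega), zero_mul, tendsto_zero_iff_abs_tendsto_zero]
    simpa [Function.comp_def, Real.sqrt_sq_eq_abs] using (Real.continuous_sqrt.tendsto 0).comp hsq
  · have hV : IsOpen (Fᶜ ∩ {x | g x ≠ 0}) := hg.isOpen_inter_preimage hU isOpen_ne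
    have hhx : ContinuousAt h x := hh.continuousAt (hV.mem_nhds ⟨hx, h0⟩)
    fun_prop

variable [Fintype ι]

theorem contDiffOn_succ_pow_mul [DecidableEq ι] (hU : IsOpen Fᶜ) {k M : ℕ} (hM : 2 ≤ M)
    (hgd : ∀ x ∈ Fᶜ ∩ {x | g x ≠ 0}, DifferentiableAt ℝ g x)
    (hhd : ∀ x ∈ Fᶜ ∩ {x | g x ≠ 0}, DifferentiableAt ℝ h x)
    (hc : ContinuousOn (fun x => g x ^ M * h x) Fᶜ)
    (hdh : ∀ i, ContDiffOn ℝ k (fun x => g x ^ M * fderiv ℝ h x (Pi.single i 1)) Fᶜ)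
    (hdg : ∀ i, ContDiffOn ℝ k
      (fun x => g x ^ (M - 1) * (h x * fderiv ℝ g x (Pi.single i 1))) Fᶜ) :
    ContDiffOn ℝ (k + 1) (fun x => g x ^ M * h x) Fᶜ := by
  set D : ι → (ι → ℝ) → ℝ := fun i x => g x ^ M * fderiv ℝ h x (Pi.single i 1) +
    M * (g x ^ (M - 1) * (h x * fderiv ℝ g x (Pi.single i 1))) with hD
  refine contDiffOn_succ_of_hasFDerivAt_or_eq_zero hU hc
    (L := fun x => ∑ i, D i x • ContinuousLinearMap.proj (R := ℝ) (φ := fun _ => ℝ) i)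
    (ContDiffOn.sum fun i _ => ((hdh i).add (contDiffOn_const.mul (hdg i))).smul contDiffOn_const)
    fun x hx => ?_
  by_cases hgx : g x = 0
  · have hM₀ : M ≠ 0 := by omega
    have hM₁ : M - 1 ≠ 0 := by omega
    exact .inr ⟨by simp [hgx, hM₀], Finset.sum_eq_zero fun i _ => by simp [hD, hgx, hM₀, hM₁]⟩
  · have hderiv := ((hgd x ⟨hx, hgx⟩).hasFDerivAt.pow M).mul (hhd x ⟨hx, hgx⟩).hasFDerivAt
    refine .inl (hderiv.congr_fderiv
      (ContinuousLinearMap.coe_injective (LinearMap.pi_ext' fun i => ?_)))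
    refine LinearMap.ext_ring (Eq.trans ?_ (sum_smul_proj_apply_single (D · x) i).symm)
    simp only [hD, nsmul_eq_mul, LinearMap.comp_apply, LinearMap.single_apply,
      ContinuousLinearMap.coe_coe, add_apply, smul_apply, smul_eq_mul]
    ring

theorem exists_forall_le_contDiffOn_pow_mul (hFc : IsClosed F) (hF : IsSemialgebraic (· ∈ F))
    (hg : ContinuousOn g Fᶜ) (hgr : IsRationalOn Fᶜ g) {k : ℕ}
    (hgk : ContDiffOn ℝ k g (Fᶜ ∩ {x | g x ≠ 0}))
    (hhk : ContDiffOn ℝ k h (Fᶜ ∩ {x | g x ≠ 0})) (hhr : IsRationalOn (Fᶜ ∩ {x | g x ≠ 0}) h) :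
    ∃ M₀, ∀ M ≥ M₀, ContDiffOn ℝ k (fun x => g x ^ M * h x) Fᶜ := by
  classical
  have hU : IsOpen Fᶜ := hFc.isOpen_compl
  set V := Fᶜ ∩ {x | g x ≠ 0}
  have hV : IsOpen V := hg.isOpen_inter_preimage hU isOpen_ne
  induction k generalizing h with
  | zero =>
    simp only [Nat.cast_zero, contDiffOn_zero] at hhk ⊢
    exact exists_forall_le_continuousOn_pow_mul hFc hF hg hgr hhk hhr
  | succ k ih =>
    have hdiff {f : (ι → ℝ) → ℝ} (hf : ContDiffOn ℝ (k + 1 : ℕ) f V) :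
        ∀ x ∈ V, DifferentiableAt ℝ f x := fun x hx =>
      (hf.differentiableOn (by simp)).differentiableAt (hV.mem_nhds hx)
    have hpartial {f : (ι → ℝ) → ℝ} (hf : ContDiffOn ℝ (k + 1 : ℕ) f V) (i : ι) :
        ContDiffOn ℝ k (fun x => fderiv ℝ f x (Pi.single i 1)) V :=
      (hf.fderiv_of_isOpen hV (by norm_cast)).clm_apply contDiffOn_const
    have hle {f : (ι → ℝ) → ℝ} (hf : ContDiffOn ℝ (k + 1 : ℕ) f V) : ContDiffOn ℝ k f V :=
      hf.of_le (by norm_cast; omega)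
    obtain ⟨M₀, hM₀⟩ := exists_forall_le_continuousOn_pow_mul hFc hF hg hgr hhk.continuousOn hhr
    choose M₁ hM₁ using fun i => ih (hle hgk) (hpartial hhk i) (hhr.fderiv_single hV (hdiff hhk) i)
    choose M₂ hM₂ using fun i => ih (hle hgk) ((hle hhk).mul (hpartial hgk i))
      (hhr.mul ((hgr.mono Set.inter_subset_left).fderiv_single hV (hdiff hgk) i))
    refine ⟨M₀ + ∑ i, M₁ i + ∑ i, M₂ i + 2, fun M hM => ?_⟩
    have hle_sum (N : ι → ℕ) (i : ι) : N i ≤ ∑ i, N i :=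
      Finset.single_le_sum (fun _ _ => Nat.zero_le _) (Finset.mem_univ i)
    refine contDiffOn_succ_pow_mul hU (by omega) (hdiff hgk) (hdiff hhk) (hM₀ M (by omega))
      (fun i => hM₁ i M ?_) (fun i => hM₂ i (M - 1) ?_)
    · have := hle_sum M₁ i
      omega
    · have := hle_sum M₂ i
      omega

end PowMul

section VanishingWeight

variable {ι κ : Type*} [Fintype ι] {k : ℕ} {F A : Set (ι → ℝ)}

theorem contDiff_eval (p : MvPolynomial ι ℝ) : ContDiff ℝ k fun x => eval x p :=
  (AnalyticOnNhd.eval_mvPolynomial p).contDiff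

/-- A weight `0 < φ ≤ 1`, of class `C^k` off `F` and equal there to `num / den`, which extends
continuously by `0` along `A`: at the points of `A` one has `num = 0` and `den ≠ 0`. -/
structure VanishingWeight (k : ℕ) (F A : Set (ι → ℝ)) where
  /-- The weight itself; only its values off `F` matter. -/
  toFun : (ι → ℝ) → ℝ
  num : MvPolynomial ι ℝ
  den : MvPolynomial ι ℝ
  den_ne_zero : den ≠ 0
  contDiffOn : ContDiffOn ℝ k toFun Fᶜ
  pos : ∀ x, 0 < toFun x
  le_one : ∀ x, toFun x ≤ 1
  den_mul : ∀ x ∈ Fᶜ, eval x den * toFun x = eval x num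
  num_eq_zero : ∀ x ∈ A, eval x num = 0
  den_eval_ne_zero : ∀ x ∈ A, eval x den ≠ 0

theorem nonempty_vanishingWeight (hFc : IsClosed F) (hF : IsSemialgebraic (· ∈ F))
    {a b : MvPolynomial ι ℝ} (hA : {x | eval x a = 0} \ {x | eval x b = 0} ⊆ F) :
    Nonempty (VanishingWeight k F ({x | eval x a = 0} \ {x | eval x b = 0})) := by
  rcases eq_or_ne b 0 with rfl | hb
  · exact ⟨⟨fun _ => 1, 1, 1, one_ne_zero, contDiffOn_const, by simp, by simp, by simp, by simp,
      by simp⟩⟩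
  have ha : ∀ x ∈ Fᶜ, eval x b ≠ 0 → eval x a ≠ 0 := fun x hx hbx hax => hx (hA ⟨hax, hbx⟩)
  have hinv : IsRationalOn (Fᶜ ∩ {x | eval x b ≠ 0}) fun x => (eval x a)⁻¹ := by
    rcases eq_or_ne a 0 with rfl | ha₀
    · exact ⟨0, 1, one_ne_zero, fun x hx => absurd (map_zero _) (ha x hx.1 hx.2)⟩
    · exact ⟨1, a, ha₀, fun x hx => by rw [mul_inv_cancel₀ (ha x hx.1 hx.2), map_one]⟩
  obtain ⟨M, hM⟩ := exists_forall_le_contDiffOn_pow_mul hFc hF (k := k)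
    (continuous_eval b).continuousOn ⟨b, 1, one_ne_zero, fun x _ => by simp⟩
    (contDiff_eval b).contDiffOn
    ((contDiff_eval a).contDiffOn.inv fun x hx => ha x hx.1 hx.2) hinv
  have hden (x) (hbx : eval x b ≠ 0) : eval x (a ^ 2 + (b ^ (M + 1)) ^ 2) ≠ 0 := by
    simp only [map_add, map_pow]
    positivity
  refine ⟨⟨fun x => (1 + (eval x b ^ (M + 1) * (eval x a)⁻¹) ^ 2)⁻¹, a ^ 2,
    a ^ 2 + (b ^ (M + 1)) ^ 2, fun h0 => ?_,
    (contDiffOn_const.add ((hM (M + 1) M.le_succ).pow 2)).inv fun x _ => by positivity,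
    fun x => by positivity, fun x => inv_le_one_of_one_le₀ (le_add_of_nonneg_right (sq_nonneg _)),
    fun x hx => ?_, fun x hx => by simp [show eval x a = 0 from hx.1], fun x hx => hden x hx.2⟩⟩
  · obtain ⟨x, hbx⟩ := (dense_setOf_eval_ne_zero hb).nonempty
    exact hden x hbx (by rw [h0, map_zero])
  · by_cases hax : eval x a = 0
    · have hbx : eval x b = 0 := by_contra fun hbx => ha x hx hbx hax
      simp [hax, hbx]
    · simp only [map_add, map_pow]
      field_simp

namespace VanishingWeight

variable [Fintype κ] {A : κ → Set (ι → ℝ)} (W : ∀ i, VanishingWeight k F (A i))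

open Classical in
/-- The product of finitely many weights, extended by `0` to `F`. -/
noncomputable def prodExtend (x : ι → ℝ) : ℝ :=
  if x ∈ F then 0 else ∏ i, (W i).toFun x

variable {W}

theorem prodExtend_of_mem {x : ι → ℝ} (hx : x ∈ F) : prodExtend W x = 0 :=
  if_pos hx

theorem prodExtend_of_mem_compl {x : ι → ℝ} (hx : x ∈ Fᶜ) :
    prodExtend W x = ∏ i, (W i).toFun x :=
  if_neg hx

theorem prodExtend_pos {x : ι → ℝ} (hx : x ∈ Fᶜ) : 0 < prodExtend W x := by
  rw [prodExtend_of_mem_compl hx]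
  exact Finset.prod_pos fun i _ => (W i).pos x

theorem prodExtend_eq_zero_iff {x : ι → ℝ} : prodExtend W x = 0 ↔ x ∈ F :=
  ⟨fun h => by_contra fun hx => (prodExtend_pos hx).ne' h, prodExtend_of_mem⟩

theorem prodExtend_le {x : ι → ℝ} (hx : x ∈ Fᶜ) (i : κ) : prodExtend W x ≤ (W i).toFun x := by
  classical
  rw [prodExtend_of_mem_compl hx, ← Finset.mul_prod_erase _ _ (Finset.mem_univ i)]
  exact mul_le_of_le_one_right ((W i).pos x).le
    (Finset.prod_le_one (fun j _ => ((W j).pos x).le) fun j _ => (W j).le_one x)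

theorem contDiffOn_prodExtend : ContDiffOn ℝ k (prodExtend W) Fᶜ :=
  (contDiffOn_prod fun i _ => (W i).contDiffOn).congr fun _ hx => prodExtend_of_mem_compl hx

theorem continuousAt_prodExtend_of_mem {i : κ} {x : ι → ℝ} (hx : x ∈ A i) (hxF : x ∈ F) :
    ContinuousAt (prodExtend W) x := by
  have hden := (W i).den_eval_ne_zero x hx
  have hlim : Tendsto (fun y => |eval y (W i).num / eval y (W i).den|) (𝓝 x) (𝓝 0) := by
    have hcont := ((continuous_eval (W i).num).continuousAt.div
      (continuous_eval (W i).den).continuousAt hden).abs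
    simpa [ContinuousAt, (W i).num_eq_zero x hx] using hcont
  rw [ContinuousAt, prodExtend_of_mem hxF]
  refine squeeze_zero_norm' ?_ hlim
  filter_upwards [(continuous_eval (W i).den).continuousAt.eventually_ne hden] with y hy
  by_cases hyF : y ∈ F
  · rw [prodExtend_of_mem hyF, norm_zero]
    positivity
  · rw [← (W i).den_mul y hyF, mul_div_cancel_left₀ _ hy]
    exact abs_le_abs_of_nonneg (prodExtend_pos hyF).le (prodExtend_le hyF i)

theorem continuous_prodExtend (hFc : IsClosed F) (hF : F ⊆ ⋃ i, A i) :
    Continuous (prodExtend W) := by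
  refine continuous_iff_continuousAt.2 fun x => ?_
  by_cases hx : x ∈ F
  · obtain ⟨i, hi⟩ := Set.mem_iUnion.1 (hF hx)
    exact continuousAt_prodExtend_of_mem hi hx
  · exact contDiffOn_prodExtend.continuousOn.continuousAt (hFc.isOpen_compl.mem_nhds hx)

theorem isRationalOn_prodExtend (hF : F ⊆ ⋃ i, A i) :
    IsRationalOn Set.univ (prodExtend W) := by
  refine ⟨∏ i, (W i).num, ∏ i, (W i).den,
    Finset.prod_ne_zero_iff.2 fun i _ => (W i).den_ne_zero, fun x _ => ?_⟩
  by_cases hx : x ∈ F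
  · obtain ⟨i, hi⟩ := Set.mem_iUnion.1 (hF hx)
    rw [prodExtend_of_mem hx, mul_zero, map_prod,
      Finset.prod_eq_zero (Finset.mem_univ i) ((W i).num_eq_zero x hi)]
  · rw [prodExtend_of_mem_compl hx, map_prod, map_prod, ← Finset.prod_mul_distrib]
    exact Finset.prod_congr rfl fun i _ => (W i).den_mul x hx

end VanishingWeight

end VanishingWeight

theorem isSemialgebraic_iUnion_sdiff {ι κ : Type*} [Finite κ] (a b : κ → MvPolynomial ι ℝ) :
    IsSemialgebraic (· ∈ ⋃ i, {x | eval x (a i) = 0} \ {x | eval x (b i) = 0}) :=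
  ((SignDetermined.pi fun i => (SignDetermined.eq_zero (a i)).and (.not (.eq_zero (b i)))).comp
    (∃ i, · i)).congr_iff fun x => by simp

theorem ZariskiConstructible.exists_isRegulous {n : ℕ} {F : Set (Fin n → ℝ)}
    (hF : ZariskiConstructible n F) (hFc : IsClosed F) (k : ℕ) :
    ∃ f : (Fin n → ℝ) → ℝ, IsRegulous n k f ∧ {x | f x = 0} = F := by
  obtain ⟨m, a, b, hab⟩ := hF
  have hsemi : IsSemialgebraic (· ∈ F) := hab ▸ isSemialgebraic_iUnion_sdiff a b
  have W (i : Fin m) : VanishingWeight k F ({x | eval x (a i) = 0} \ {x | eval x (b i) = 0}) :=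
    (nonempty_vanishingWeight hFc hsemi fun x hx => hab ▸ Set.mem_iUnion.2 ⟨i, hx⟩).some
  obtain ⟨p, q, hq, hpq⟩ := VanishingWeight.isRationalOn_prodExtend (W := W) hab.subset
  -- `prodExtend W` is `C^k` off its zero set `F`, so a power of it is `C^k` everywhere.
  obtain ⟨M, hM⟩ := exists_forall_le_contDiffOn_pow_mul (F := ∅) (k := k) (h := fun _ => 1)
    isClosed_empty (.const _)
    (VanishingWeight.continuous_prodExtend (W := W) hFc hab.subset).continuousOn
    ⟨p, q, hq, fun x _ => hpq x trivial⟩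
    (VanishingWeight.contDiffOn_prodExtend.mono fun x hx =>
      mt VanishingWeight.prodExtend_of_mem hx.2)
    contDiffOn_const ⟨1, 1, one_ne_zero, fun x _ => by simp⟩
  refine ⟨fun x => VanishingWeight.prodExtend W x ^ (M + 1), ⟨?_, p ^ (M + 1), q ^ (M + 1),
    pow_ne_zero _ hq, fun x => ?_⟩, ?_⟩
  · simpa [contDiffOn_univ] using hM (M + 1) M.le_succ
  · rw [map_pow, map_pow, ← mul_pow, hpq x trivial]
  · ext x
    simp [VanishingWeight.prodExtend_eq_zero_iff]

section IdealOverPolynomialRing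

variable {A : Type*} [CommRing A] {J : Ideal A[X]}

/-- `m` is a polynomial of minimal degree in `J` outside `I[X]`, where `I = J ∩ A`. If `J` is prime,
then `m` is, up to a factor, the minimal polynomial of `X` over the fraction field of `A ⧸ I`; this
notion avoids passing to that field. -/
structure IsRelativeMinpoly (J : Ideal A[X]) (m : A[X]) : Prop where
  mem : m ∈ J
  leadingCoeff_notMem : m.leadingCoeff ∉ J.comap Polynomial.C
  mem_map_of_degree_lt : ∀ R ∈ J, R.degree < m.degree → R ∈ (J.comap Polynomial.C).map Polynomial.C

theorem exists_isRelativeMinpoly (h : ¬ J ≤ (J.comap Polynomial.C).map Polynomial.C) :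
    ∃ m, IsRelativeMinpoly J m := by
  set N := (J.comap Polynomial.C).map Polynomial.C
  obtain ⟨m, ⟨hmJ, hmN⟩, hm⟩ := (InvImage.wf Polynomial.degree wellFounded_lt).has_min
    {f | f ∈ J ∧ f ∉ N} (SetLike.not_le_iff_exists.1 h)
  have hmin : ∀ R ∈ J, R.degree < m.degree → R ∈ N := fun R hR hdeg => by
    by_contra hRN
    exact hm R ⟨hR, hRN⟩ hdeg
  refine ⟨m, hmJ, fun hlc => hmN ?_, hmin⟩
  have hlead : Polynomial.C m.leadingCoeff * Polynomial.X ^ m.natDegree ∈ N :=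
    N.mul_mem_right _ (Ideal.mem_map_of_mem _ hlc)
  have herase : m.eraseLead ∈ J := by
    rw [← Polynomial.self_sub_C_mul_X_pow]
    exact J.sub_mem hmJ (Ideal.map_comap_le hlead)
  have hm0 : m ≠ 0 := fun h0 => hmN (h0 ▸ N.zero_mem)
  rw [← m.eraseLead_add_C_mul_X_pow]
  exact N.add_mem (hmin _ herase (Polynomial.degree_eraseLead_lt hm0)) hlead

theorem aeval_mk_X_map_mk (f : A[X]) :
    Polynomial.aeval (Ideal.Quotient.mk J Polynomial.X)
      (f.map (Ideal.Quotient.mk (J.comap (algebraMap A A[X])))) = Ideal.Quotient.mk J f := by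
  induction f using Polynomial.induction_on' with
  | add f g hf hg => rw [Polynomial.map_add, map_add, hf, hg, map_add]
  | monomial k a =>
    rw [Polynomial.map_monomial, Polynomial.aeval_monomial,
      ← Polynomial.C_mul_X_pow_eq_monomial, map_mul, map_pow]
    rfl

/-- Modulo a prime `J` not extended from the base ring, the variable is algebraic over the base,
hence so is everything; a nonzero algebraic element divides a nonzero constant. -/
theorem IsRelativeMinpoly.comap_C_lt [J.IsPrime] {m : A[X]} (hm : IsRelativeMinpoly J m) {c : A[X]}
    (hc : c ∉ J) :
    J.comap Polynomial.C < (J ⊔ Ideal.span {c}).comap Polynomial.C := by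
  refine lt_of_le_of_ne (Ideal.comap_mono le_sup_left) fun heq => ?_
  set I := J.comap (algebraMap A A[X])
  have hX : IsAlgebraic (A ⧸ I) (Ideal.Quotient.mk J Polynomial.X) := by
    refine ⟨m.map (Ideal.Quotient.mk I), fun h0 => hm.leadingCoeff_notMem ?_, ?_⟩
    · have := congrArg (fun f : (A ⧸ I)[X] => f.coeff m.natDegree) h0
      rwa [Polynomial.coeff_map, Polynomial.coeff_zero, Ideal.Quotient.eq_zero_iff_mem] at this
    · rw [aeval_mk_X_map_mk, Ideal.Quotient.eq_zero_iff_mem.2 hm.mem]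
  have hcalg : IsAlgebraic (A ⧸ I) (Ideal.Quotient.mk J c) := by
    refine Algebra.isAlgebraic_adjoin_singleton_iff.2 hX _ ?_
    rw [← aeval_mk_X_map_mk c]
    exact Polynomial.aeval_mem_adjoin_singleton _ _
  obtain ⟨r, hr, u, hu⟩ := hcalg.exists_nonzero_dvd
    (mem_nonZeroDivisors_of_ne_zero (mt Ideal.Quotient.eq_zero_iff_mem.1 hc))
  obtain ⟨r, rfl⟩ := Ideal.Quotient.mk_surjective r
  obtain ⟨u, rfl⟩ := Ideal.Quotient.mk_surjective u
  have hru : Polynomial.C r - c * u ∈ J := by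
    rw [← Ideal.Quotient.eq, map_mul, ← hu]
    rfl
  refine hr (Ideal.Quotient.eq_zero_iff_mem.2 (heq.ge ?_))
  rw [Ideal.mem_comap, ← sub_add_cancel (Polynomial.C r) (c * u)]
  exact Ideal.add_mem _ (Ideal.mem_sup_left hru)
    (Ideal.mul_mem_right _ _ (Ideal.mem_sup_right (Ideal.mem_span_singleton_self c)))

theorem IsRelativeMinpoly.derivative_notMem [Algebra ℚ A] [J.IsPrime] {m : A[X]}
    (hm : IsRelativeMinpoly J m) : m.derivative ∉ J := by
  have hdeg : m.natDegree ≠ 0 := fun h0 => hm.leadingCoeff_notMem <| by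
    rw [Ideal.mem_comap, Polynomial.leadingCoeff, h0, ← Polynomial.eq_C_of_natDegree_eq_zero h0]
    exact hm.mem
  intro hder
  have hm₀ : m ≠ 0 := Polynomial.ne_zero_of_natDegree_gt (Nat.pos_of_ne_zero hdeg)
  have hcoeff := Ideal.mem_map_C_iff.1
    (hm.mem_map_of_degree_lt _ hder (Polynomial.degree_derivative_lt hm₀)) (m.natDegree - 1)
  rw [Polynomial.coeff_derivative, ← Nat.cast_succ, Nat.succ_eq_add_one,
    Nat.sub_one_add_one hdeg] at hcoeff
  have hprime : (J.comap Polynomial.C).IsPrime := inferInstance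
  have hunit : IsUnit (m.natDegree : A) := by
    simpa using (IsUnit.mk0 (m.natDegree : ℚ) (Nat.cast_ne_zero.2 hdeg)).map (algebraMap ℚ A)
  exact (hprime.mem_or_mem hcoeff).elim hm.leadingCoeff_notMem
    fun hmem => hprime.ne_top (Ideal.eq_top_of_isUnit_mem _ hmem hunit)

theorem IsRelativeMinpoly.exists_pow_mul_sub_mul_mem {m : A[X]} (hm : IsRelativeMinpoly J m)
    {f : A[X]} (hf : f ∈ J) :
    ∃ (e : ℕ) (S : A[X]), Polynomial.C (m.leadingCoeff ^ e) * f - m * S ∈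
      (J.comap Polynomial.C).map Polynomial.C := by
  have hm0 : m ≠ 0 := by
    rintro rfl
    exact hm.leadingCoeff_notMem (by simp)
  obtain ⟨e, S, R, hdiv, hdeg⟩ := exists_C_leadingCoeff_pow_mul_eq hm0 f
  have hR : Polynomial.C (m.leadingCoeff ^ e) * f - m * S = R := by rw [hdiv, add_sub_cancel_left]
  have hRJ : R ∈ J := hR ▸ J.sub_mem (J.mul_mem_left _ hf) (J.mul_mem_right _ hm.mem)
  exact ⟨e, S, hR ▸ hm.mem_map_of_degree_lt R hRJ hdeg⟩

end IdealOverPolynomialRing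

section RealPoints

variable {Y A : Type*} [CommRing A]

/-- The real points of an ideal `I`: the points of `Y`, acting on `A` by the evaluations `ev`, at
which all elements of `I` vanish. -/
def realPoints (ev : Y → A →+* ℝ) (I : Ideal A) : Set Y :=
  {y | I ≤ RingHom.ker (ev y)}

/-- Generic density: off a hypersurface that does not contain the whole locus of `I`, the real
points of `I` can be moved slightly so as to avoid any given such hypersurface. For prime ideals of
polynomials this plays the role of the density of the nonsingular real points. -/
def IsGenericallyDense [TopologicalSpace Y] (ev : Y → A →+* ℝ) (I : Ideal A) : Prop :=
  ∃ b ∉ I, ∀ c ∉ I,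
    realPoints ev I ∩ {y | ev y b ≠ 0} ⊆ closure (realPoints ev I ∩ {y | ev y c ≠ 0})

theorem realPoints_sup_span_singleton (ev : Y → A →+* ℝ) (I : Ideal A) (a : A) :
    realPoints ev (I ⊔ Ideal.span {a}) = realPoints ev I ∩ {y | ev y a = 0} := by
  ext y
  change I ⊔ Ideal.span {a} ≤ RingHom.ker (ev y) ↔ _
  rw [sup_le_iff, Ideal.span_singleton_le_iff_mem]
  rfl

theorem realPoints_polyPoint_map_C (ev : Y → A →+* ℝ) (I : Ideal A) :
    realPoints (polyPoint ev) (I.map Polynomial.C) = Prod.fst ⁻¹' realPoints ev I := by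
  have hker (z : Y × ℝ) : (RingHom.ker (polyPoint ev z)).comap Polynomial.C =
      RingHom.ker (ev z.1) := by
    ext a
    rw [Ideal.mem_comap, RingHom.mem_ker, RingHom.mem_ker, polyPoint_apply, Polynomial.map_C,
      Polynomial.eval_C]
  ext z
  exact Ideal.map_le_iff_le_comap.trans (iff_of_eq (congrArg (I ≤ ·) (hker z)))

theorem fst_mem_realPoints_comap_C {ev : Y → A →+* ℝ} {J : Ideal A[X]} {z : Y × ℝ}
    (hz : z ∈ realPoints (polyPoint ev) J) : z.1 ∈ realPoints ev (J.comap Polynomial.C) := by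
  have hz' : z ∈ realPoints (polyPoint ev) ((J.comap Polynomial.C).map Polynomial.C) :=
    Ideal.map_comap_le.trans hz
  rwa [realPoints_polyPoint_map_C] at hz'

theorem IsRelativeMinpoly.mem_realPoints {ev : Y → A →+* ℝ} {J : Ideal A[X]} {m : A[X]}
    (hm : IsRelativeMinpoly J m) {z : Y × ℝ} (hz : z.1 ∈ realPoints ev (J.comap Polynomial.C))
    (hlc : ev z.1 m.leadingCoeff ≠ 0) (hroot : polyPoint ev z m = 0) :
    z ∈ realPoints (polyPoint ev) J := by
  intro f hf
  obtain ⟨e, S, hS⟩ := hm.exists_pow_mul_sub_mul_mem hf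
  have hz' : z ∈ realPoints (polyPoint ev) ((J.comap Polynomial.C).map Polynomial.C) := by
    rwa [realPoints_polyPoint_map_C]
  have hmul := RingHom.mem_ker.1 (hz' hS)
  rw [map_sub, map_mul, map_mul, hroot, zero_mul, sub_zero] at hmul
  refine (mul_eq_zero.1 hmul).resolve_left ?_
  rw [polyPoint_apply, Polynomial.map_C, Polynomial.eval_C, map_pow]
  exact pow_ne_zero e hlc

theorem exists_eval_neg_and_exists_eval_pos {P : ℝ[X]} {y : ℝ} (h0 : P.eval y = 0)
    (h1 : P.derivative.eval y ≠ 0) {V : Set ℝ} (hV : V ∈ 𝓝 y) :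
    (∃ y₁ ∈ V, P.eval y₁ < 0) ∧ ∃ y₂ ∈ V, 0 < P.eval y₂ := by
  constructor <;> by_contra! hc
  · refine h1 (IsLocalMin.hasDerivAt_eq_zero ?_ (P.hasDerivAt y))
    filter_upwards [hV] with t ht
    exact h0.trans_le (hc t ht)
  · refine h1 (IsLocalMax.hasDerivAt_eq_zero ?_ (P.hasDerivAt y))
    filter_upwards [hV] with t ht
    exact (hc t ht).trans_eq h0.symm

variable [TopologicalSpace Y]

theorem continuous_polyPoint {ev : Y → A →+* ℝ} (hev : ∀ a, Continuous fun y => ev y a)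
    (f : A[X]) : Continuous fun z => polyPoint ev z f := by
  simp only [polyPoint, Polynomial.coe_eval₂RingHom, Polynomial.eval₂_eq_sum_range]
  exact continuous_finsetSum _ fun i _ =>
    ((hev (f.coeff i)).comp continuous_fst).mul (continuous_snd.pow i)

theorem eventually_exists_polyPoint_eq_zero {ev : Y → A →+* ℝ}
    (hev : ∀ a, Continuous fun y => ev y a) {m : A[X]} {z : Y × ℝ} (h0 : polyPoint ev z m = 0)
    (h1 : polyPoint ev z m.derivative ≠ 0) {V : Set ℝ} (hV : V ∈ 𝓝 z.2) :
    ∀ᶠ s in 𝓝 z.1, ∃ y ∈ V, polyPoint ev (s, y) m = 0 := by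
  obtain ⟨ε, hε, hball⟩ := Metric.mem_nhds_iff.1 hV
  rw [polyPoint_apply] at h0 h1
  rw [← Polynomial.derivative_map] at h1
  obtain ⟨⟨y₁, hy₁, hneg⟩, y₂, hy₂, hpos⟩ :=
    exists_eval_neg_and_exists_eval_pos h0 h1 (Metric.ball_mem_nhds z.2 hε)
  rw [← polyPoint_apply ev (z.1, y₁)] at hneg
  rw [← polyPoint_apply ev (z.1, y₂)] at hpos
  have hcont := continuous_polyPoint hev m
  filter_upwards [(hcont.comp (.prodMk_left y₁)).continuousAt.eventually_lt_const hneg,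
    (hcont.comp (.prodMk_left y₂)).continuousAt.eventually_const_lt hpos] with s hs₁ hs₂
  obtain ⟨y, hy, hroot⟩ := (convex_ball z.2 ε).isPreconnected.intermediate_value hy₁ hy₂
    (hcont.comp (.prodMk_right s)).continuousOn ⟨hs₁.le, hs₂.le⟩
  exact ⟨y, hball hy, hroot⟩

theorem IsGenericallyDense.polyPoint_of_le {ev : Y → A →+* ℝ} {J : Ideal A[X]}
    (hJ : J ≤ (J.comap Polynomial.C).map Polynomial.C)
    (hI : IsGenericallyDense ev (J.comap Polynomial.C)) : IsGenericallyDense (polyPoint ev) J := by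
  obtain ⟨b, hb, hdense⟩ := hI
  refine ⟨Polynomial.C b, hb, fun c hc z ⟨hz, hbz⟩ => mem_closure_iff_nhds.2 fun U hU => ?_⟩
  obtain ⟨i, hi⟩ : ∃ i, c.coeff i ∉ J.comap Polynomial.C := by
    by_contra! h
    exact hc (Ideal.map_comap_le (Ideal.mem_map_C_iff.2 h))
  obtain ⟨V, hV, W, hW, hVW⟩ := mem_nhds_prod_iff.1 hU
  have hbz' : ev z.1 b ≠ 0 := by simpa [polyPoint_apply] using hbz
  obtain ⟨s, hsV, hs, hcs⟩ := mem_closure_iff_nhds.1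
    (hdense _ hi ⟨fst_mem_realPoints_comap_C hz, hbz'⟩) V hV
  have hc0 : c.map (ev s) ≠ 0 := fun h0 => hcs <| by
    rw [← Polynomial.coeff_map, h0, Polynomial.coeff_zero]
  obtain ⟨y, hyW, hy⟩ :=
    ((infinite_of_mem_nhds z.2 hW).sdiff (c.map (ev s)).roots.toFinset.finite_toSet).nonempty
  have hsy : (s, y) ∈ realPoints (polyPoint ev) ((J.comap Polynomial.C).map Polynomial.C) := by
    rwa [realPoints_polyPoint_map_C]
  refine ⟨(s, y), hVW ⟨hsV, hyW⟩, hJ.trans hsy, fun h0 => hy ?_⟩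
  rw [polyPoint_apply] at h0
  simpa [hc0] using h0

theorem IsGenericallyDense.polyPoint_of_isRelativeMinpoly [Algebra ℚ A] {ev : Y → A →+* ℝ}
    (hev : ∀ a, Continuous fun y => ev y a) {J : Ideal A[X]} [J.IsPrime] {m : A[X]}
    (hm : IsRelativeMinpoly J m) (hI : IsGenericallyDense ev (J.comap Polynomial.C)) :
    IsGenericallyDense (polyPoint ev) J := by
  have hprime : J.IsPrime := inferInstance
  obtain ⟨b, hb, hdense⟩ := hI
  refine ⟨Polynomial.C b * m.derivative, fun hmem => (hprime.mem_or_mem hmem).elim hb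
    hm.derivative_notMem, fun c hc z ⟨hz, hbz⟩ => mem_closure_iff_nhds.2 fun U hU => ?_⟩
  rw [Set.mem_ofPred_eq, map_mul, mul_ne_zero_iff] at hbz
  have hbz₁ : ev z.1 b ≠ 0 := by simpa [polyPoint_apply] using hbz.1
  obtain ⟨r, hrc, hr⟩ := SetLike.exists_of_lt (hm.comap_C_lt hc)
  have hrm : r * m.leadingCoeff ∉ J.comap Polynomial.C := fun hmem =>
    (Ideal.IsPrime.mem_or_mem inferInstance hmem).elim hr hm.leadingCoeff_notMem
  obtain ⟨V, hV, W, hW, hVW⟩ := mem_nhds_prod_iff.1 hU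
  obtain ⟨s, ⟨hsV, y, hyW, hroot⟩, hs, hrms⟩ := mem_closure_iff_nhds.1
    (hdense _ hrm ⟨fst_mem_realPoints_comap_C hz, hbz₁⟩) _
    (inter_mem hV (eventually_exists_polyPoint_eq_zero hev (hz hm.mem) hbz.2 hW))
  rw [Set.mem_ofPred_eq, map_mul, mul_ne_zero_iff] at hrms
  have hsy : (s, y) ∈ realPoints (polyPoint ev) J := hm.mem_realPoints hs hrms.2 hroot
  refine ⟨(s, y), hVW ⟨hsV, hyW⟩, hsy, fun hcsy => hrms.1 ?_⟩
  have hsup : (s, y) ∈ realPoints (polyPoint ev) (J ⊔ Ideal.span {c}) := by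
    rw [realPoints_sup_span_singleton]
    exact ⟨hsy, hcsy⟩
  exact fst_mem_realPoints_comap_C hsup hrc

end RealPoints

section GenericDensityOfPrimes

theorem IsGenericallyDense.of_comap_C {Y A : Type*} [CommRing A] [Algebra ℚ A] [TopologicalSpace Y]
    {ev : Y → A →+* ℝ} (hev : ∀ a, Continuous fun y => ev y a) {J : Ideal A[X]} [J.IsPrime]
    (hI : IsGenericallyDense ev (J.comap Polynomial.C)) : IsGenericallyDense (polyPoint ev) J := by
  by_cases hJ : J ≤ (J.comap Polynomial.C).map Polynomial.C
  · exact hI.polyPoint_of_le hJ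
  · obtain ⟨m, hm⟩ := exists_isRelativeMinpoly hJ
    exact hI.polyPoint_of_isRelativeMinpoly hev hm

theorem IsGenericallyDense.of_homeomorph {Y Z A B : Type*} [CommRing A] [CommRing B]
    [TopologicalSpace Y] [TopologicalSpace Z] {evY : Y → A →+* ℝ} {evZ : Z → B →+* ℝ} (φ : Z ≃ₜ Y)
    (e : B ≃+* A) (hev : ∀ z, (evY (φ z)).comp e = evZ z) {I : Ideal B}
    (hI : IsGenericallyDense evY (I.comap e.symm)) : IsGenericallyDense evZ I := by
  have hpoints : realPoints evZ I = φ ⁻¹' realPoints evY (I.comap e.symm) := by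
    ext z
    change I ≤ RingHom.ker (evZ z) ↔ I.comap e.symm ≤ RingHom.ker (evY (φ z))
    rw [← hev, ← RingHom.comap_ker, Ideal.comap_symm, Ideal.map_le_iff_le_comap]
    rfl
  have happly (z : Z) (c : B) : evZ z c = evY (φ z) (e c) := by
    rw [← hev]
    rfl
  obtain ⟨b, hb, hdense⟩ := hI
  refine ⟨e.symm b, hb, fun c hc => ?_⟩
  have hpre := Set.preimage_mono (f := φ) (hdense (e c) (by simpa [Ideal.mem_comap] using hc))
  rw [φ.preimage_closure, Set.preimage_inter, Set.preimage_inter, ← hpoints] at hpre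
  simpa [happly] using hpre

theorem isGenericallyDense_of_isPrime {n : ℕ} (I : Ideal (MvPolynomial (Fin n) ℝ)) [I.IsPrime] :
    IsGenericallyDense (fun x => (eval x : MvPolynomial (Fin n) ℝ →+* ℝ)) I := by
  induction n with
  | zero =>
    refine ⟨1, (Ideal.ne_top_iff_one I).1 Ideal.IsPrime.ne_top', fun c hc z ⟨hz, _⟩ =>
      subset_closure ⟨hz, fun hcz => hc ?_⟩⟩
    rw [eq_C_of_isEmpty c, eval_C] at hcz
    rw [eq_C_of_isEmpty c, hcz, C_0]
    exact I.zero_mem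
  | succ n ih =>
    have hstep : IsGenericallyDense (polyPoint fun x => (eval x : MvPolynomial (Fin n) ℝ →+* ℝ))
        (I.comap (finSuccEquiv ℝ n).toRingEquiv.symm) :=
      .of_comap_C (fun a => (contDiff_eval (k := 0) a).continuous) (ih _)
    refine hstep.of_homeomorph ((Fin.consEquivL ℝ fun _ => ℝ).toHomeomorph.symm.trans
      (Homeomorph.prodComm _ _)) _ fun z => RingHom.ext fun p => ?_
    have hp := eval_eq_eval_mv_eval' (Fin.tail z) (z 0) p
    rw [Fin.cons_self_tail] at hp
    exact (polyPoint_apply _ _ _).trans hp.symm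

end GenericDensityOfPrimes

section ContinuousRationalFunctions

variable {ι : Type*}

/-- Cancel powers of `t` until the denominator has a constant term; continuity of `φ` at `0` makes
each cancellation legitimate. -/
theorem coeff_eq_coeff_mul_of_continuous {φ : ℝ → ℝ} (hφ : Continuous φ) (j : ℕ) {P Q : ℝ[X]}
    (h : ∀ t, Q.eval t * φ t = P.eval t) (hQ : ∀ i < j, Q.coeff i = 0) :
    P.coeff j = Q.coeff j * φ 0 := by
  induction j generalizing P Q with
  | zero => rw [Polynomial.coeff_zero_eq_eval_zero, Polynomial.coeff_zero_eq_eval_zero, h]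
  | succ j ih =>
    have hQ0 : Q.coeff 0 = 0 := hQ 0 j.succ_pos
    have hP0 : P.coeff 0 = 0 := by
      rw [Polynomial.coeff_zero_eq_eval_zero, ← h, ← Polynomial.coeff_zero_eq_eval_zero, hQ0,
        zero_mul]
    have hdivX {R : ℝ[X]} (hR : R.coeff 0 = 0) (t : ℝ) : R.eval t = R.divX.eval t * t := by
      conv_lhs => rw [← R.divX_mul_X_add, hR]
      simp
    have hquot : (fun t => Q.divX.eval t * φ t) = fun t => P.divX.eval t := by
      refine Continuous.ext_on (dense_compl_singleton (0 : ℝ)) (by fun_prop) (by fun_prop)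
        fun t ht => mul_right_cancel₀ ht ?_
      rw [← hdivX hP0, mul_right_comm, ← hdivX hQ0, h]
    have hcoeff := ih (congrFun hquot) fun i hi => by
      rw [Polynomial.coeff_divX]
      exact hQ _ (Nat.succ_lt_succ hi)
    rwa [Polynomial.coeff_divX, Polynomial.coeff_divX] at hcoeff

/-- The expansion of a polynomial along the lines of direction `v`: it maps `q` to `q(x + t v)`, a
polynomial in `t` whose coefficients are polynomials in `x`. -/
noncomputable def lineExpansion (v : ι → ℝ) : MvPolynomial ι ℝ →ₐ[ℝ] (MvPolynomial ι ℝ)[X] :=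
  aeval fun i => Polynomial.C (X i) + Polynomial.C (C (v i)) * Polynomial.X

theorem eval_map_lineExpansion (v x : ι → ℝ) (t : ℝ) (q : MvPolynomial ι ℝ) :
    ((lineExpansion v q).map (eval x)).eval t = eval (x + t • v) q := by
  have hext : (polyPoint (fun x => eval x) (x, t)).comp (lineExpansion v : MvPolynomial ι ℝ →+* _) =
      eval (x + t • v) := by
    refine ringHom_ext (fun a => ?_) fun i => ?_
    · simp [lineExpansion, polyPoint, Polynomial.algebraMap_apply]
    · simp [lineExpansion, polyPoint, mul_comm t]
  exact (polyPoint_apply _ _ _).symm.trans (RingHom.congr_fun hext q)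

/-- The denominator `Q` is the first coefficient outside `I` of the given denominator, expanded
along lines in a direction that joins `z` to a point where the latter does not vanish. -/
theorem IsRationalOn.exists_notMem_mul_eq [Finite ι] {g : (ι → ℝ) → ℝ} (hg : Continuous g)
    (hrat : IsRationalOn Set.univ g) {I : Ideal (MvPolynomial ι ℝ)} {z : ι → ℝ}
    (hz : z ∈ realPoints (fun x => eval x) I) :
    ∃ P, ∃ Q ∉ I, ∀ w ∈ realPoints (fun x => eval x) I, eval w Q * g w = eval w P := by
  classical
  obtain ⟨p, q, hq, hpq⟩ := hrat
  obtain ⟨x, hx⟩ := (dense_setOf_eval_ne_zero hq).nonempty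
  set v := x - z
  have hex : ∃ j, (lineExpansion v q).coeff j ∉ I := by
    by_contra! hmem
    refine hx ?_
    have h0 : (lineExpansion v q).map (eval z) = 0 := by
      ext j
      rw [Polynomial.coeff_map, Polynomial.coeff_zero]
      exact hz (hmem j)
    rw [show x = z + (1 : ℝ) • v by simp [v], ← eval_map_lineExpansion, h0, Polynomial.eval_zero]
  refine ⟨(lineExpansion v p).coeff (Nat.find hex), _, Nat.find_spec hex, fun w hw => ?_⟩
  have hline := coeff_eq_coeff_mul_of_continuous (φ := fun t => g (w + t • v)) (by fun_prop)
    (Nat.find hex) (P := (lineExpansion v p).map (eval w)) (Q := (lineExpansion v q).map (eval w))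
    (fun t => by rw [eval_map_lineExpansion, eval_map_lineExpansion, hpq _ trivial]) fun i hi => by
      rw [Polynomial.coeff_map]
      exact hw (not_not.1 (Nat.find_min hex hi))
  simpa [Polynomial.coeff_map] using hline.symm

end ContinuousRationalFunctions

section Constructibility

theorem realPoints_eq_union_of_mul_mem {Y A : Type*} [CommRing A] (ev : Y → A →+* ℝ) {I : Ideal A}
    {a b : A} (hab : a * b ∈ I) :
    realPoints ev I = realPoints ev (I ⊔ Ideal.span {a}) ∪ realPoints ev (I ⊔ Ideal.span {b}) := by
  rw [realPoints_sup_span_singleton, realPoints_sup_span_singleton, ← Set.inter_union_distrib_left,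
    eq_comm, Set.inter_eq_left]
  intro y hy
  have hmul := RingHom.mem_ker.1 (hy hab)
  rw [map_mul] at hmul
  exact mul_eq_zero.1 hmul

theorem exists_realPoints_eq_setOf_eval_eq_zero {ι : Type*} [Finite ι]
    (I : Ideal (MvPolynomial ι ℝ)) :
    ∃ a : MvPolynomial ι ℝ, realPoints (fun x => eval x) I = {x | eval x a = 0} := by
  obtain ⟨s, rfl⟩ := (isNoetherianRing_iff_ideal_fg _).1 inferInstance I
  refine ⟨∑ f ∈ s, f ^ 2, ?_⟩
  ext x
  change Ideal.span (s : Set (MvPolynomial ι ℝ)) ≤ RingHom.ker (eval x) ↔ eval x _ = 0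
  rw [Ideal.span_le, map_sum,
    Finset.sum_eq_zero_iff_of_nonneg fun f _ => by rw [map_pow]; positivity]
  simp only [map_pow, pow_eq_zero_iff two_ne_zero]
  rfl

variable {n : ℕ}

theorem exists_notMem_subset_or_subset (E : Set ((Fin n → ℝ) → ℝ)) (hEc : ∀ g ∈ E, Continuous g)
    (hEr : ∀ g ∈ E, IsRationalOn Set.univ g) (I : Ideal (MvPolynomial (Fin n) ℝ)) [I.IsPrime] :
    ∃ a ∉ I, realPoints (fun x => eval x) I \ {x | eval x a = 0} ⊆ {x | ∀ g ∈ E, g x = 0} ∨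
      {x | ∀ g ∈ E, g x = 0} ∩ realPoints (fun x => eval x) I ⊆ {x | eval x a = 0} := by
  obtain ⟨b, hb, hdense⟩ := isGenericallyDense_of_isPrime I
  by_cases hE : realPoints (fun x => eval x) I \ {x | eval x b = 0} ⊆ {x | ∀ g ∈ E, g x = 0}
  · exact ⟨b, hb, .inl hE⟩
  obtain ⟨z, ⟨hzI, hzb⟩, hzE⟩ := Set.not_subset.1 hE
  obtain ⟨g, hg, hgz⟩ : ∃ g ∈ E, g z ≠ 0 := by simpa using hzE
  obtain ⟨P, Q, hQ, hPQ⟩ := (hEr g hg).exists_notMem_mul_eq (hEc g hg) hzI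
  refine ⟨P, fun hP => ?_, .inr fun w ⟨hwE, hwI⟩ => ?_⟩
  · obtain ⟨w, hgw, hwI, hwQ⟩ := mem_closure_iff_nhds.1 (hdense Q hQ ⟨hzI, hzb⟩) _
      ((hEc g hg).continuousAt.eventually_ne hgz)
    exact mul_ne_zero hwQ hgw ((hPQ w hwI).trans (hwI hP))
  · exact (hPQ w hwI).symm.trans (mul_eq_zero_of_right _ (hwE g hg))

namespace ZariskiConstructible

variable {S T : Set (Fin n → ℝ)}

theorem empty : ZariskiConstructible n ∅ :=
  ⟨0, Fin.elim0, Fin.elim0, by simp⟩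

theorem sdiff (a b : MvPolynomial (Fin n) ℝ) :
    ZariskiConstructible n ({x | eval x a = 0} \ {x | eval x b = 0}) :=
  ⟨1, fun _ => a, fun _ => b, (Set.iUnion_const _).symm⟩

theorem union (hS : ZariskiConstructible n S) (hT : ZariskiConstructible n T) :
    ZariskiConstructible n (S ∪ T) := by
  obtain ⟨m, a, b, rfl⟩ := hS
  obtain ⟨m', a', b', rfl⟩ := hT
  refine ⟨m + m', Sum.elim a a' ∘ finSumFinEquiv.symm, Sum.elim b b' ∘ finSumFinEquiv.symm, ?_⟩
  simp only [Function.comp_apply]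
  rw [finSumFinEquiv.symm.surjective.iUnion_comp fun i =>
    {x | eval x (Sum.elim a a' i) = 0} \ {x | eval x (Sum.elim b b' i) = 0}, Set.iUnion_sum]
  rfl

theorem inter_realPoints_of_isPrime {I : Ideal (MvPolynomial (Fin n) ℝ)} [I.IsPrime]
    {E : Set ((Fin n → ℝ) → ℝ)} (hEc : ∀ g ∈ E, Continuous g)
    (hEr : ∀ g ∈ E, IsRationalOn Set.univ g)
    (ih : ∀ I' > I, ZariskiConstructible n
      ({x | ∀ g ∈ E, g x = 0} ∩ realPoints (fun x => eval x) I')) :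
    ZariskiConstructible n ({x | ∀ g ∈ E, g x = 0} ∩ realPoints (fun x => eval x) I) := by
  obtain ⟨a, ha, hE⟩ := exists_notMem_subset_or_subset E hEc hEr I
  have hsmaller := ih _ (Submodule.lt_sup_iff_notMem.2 ha)
  rw [realPoints_sup_span_singleton, ← Set.inter_assoc] at hsmaller
  rcases hE with hE | hE
  · obtain ⟨c, hc⟩ := exists_realPoints_eq_setOf_eval_eq_zero I
    rw [← Set.sdiff_union_inter (_ ∩ _) {x | eval x a = 0}, Set.inter_sdiff_assoc,
      Set.inter_eq_right.2 hE, hc]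
    rw [hc] at hsmaller
    exact (sdiff c a).union hsmaller
  · rwa [Set.inter_eq_left.2 hE] at hsmaller

theorem inter_realPoints {E : Set ((Fin n → ℝ) → ℝ)} (hEc : ∀ g ∈ E, Continuous g)
    (hEr : ∀ g ∈ E, IsRationalOn Set.univ g) (I : Ideal (MvPolynomial (Fin n) ℝ)) :
    ZariskiConstructible n ({x | ∀ g ∈ E, g x = 0} ∩ realPoints (fun x => eval x) I) := by
  induction I using WellFoundedGT.induction with | _ I ih
  by_cases hI : I.IsPrime
  · exact inter_realPoints_of_isPrime hEc hEr ih
  rcases Ideal.not_isPrime_iff.1 hI with rfl | ⟨a, ha, b, hb, hab⟩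
  · convert empty (n := n)
    refine Set.eq_empty_of_forall_notMem fun x ⟨_, hx⟩ => ?_
    simpa using hx (Submodule.mem_top (x := 1))
  · rw [realPoints_eq_union_of_mul_mem _ hab, Set.inter_union_distrib_left]
    exact (ih _ (Submodule.lt_sup_iff_notMem.2 ha)).union
      (ih _ (Submodule.lt_sup_iff_notMem.2 hb))

end ZariskiConstructible

theorem RegulouslyClosed.zariskiConstructible {k : ℕ} {F : Set (Fin n → ℝ)}
    (hF : RegulouslyClosed n k F) : ZariskiConstructible n F := by
  obtain ⟨E, hE, rfl⟩ := hF
  have hinter := ZariskiConstructible.inter_realPoints (fun g hg => (hE g hg).1.continuous)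
    (fun g hg => (hE g hg).2.imp fun p => .imp fun q ⟨hq, hpq⟩ => ⟨hq, fun x _ => hpq x⟩) ⊥
  have huniv : realPoints (fun x : Fin n → ℝ => eval x) ⊥ = Set.univ :=
    Set.eq_univ_of_forall fun x => (bot_le : ⊥ ≤ RingHom.ker (eval x))
  rw [huniv, Set.inter_univ] at hinter
  simpa only [Set.ofPred_forall] using hinter

theorem RegulouslyClosed.isClosed {k : ℕ} {F : Set (Fin n → ℝ)} (hF : RegulouslyClosed n k F) :
    IsClosed F := by
  obtain ⟨E, hE, rfl⟩ := hF
  exact isClosed_biInter fun g hg => isClosed_eq (hE g hg).1.continuous continuous_const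

theorem IsRegulous.regulouslyClosed_setOf_eq_zero {k : ℕ} {f : (Fin n → ℝ) → ℝ}
    (hf : IsRegulous n k f) : RegulouslyClosed n k {x | f x = 0} :=
  ⟨{f}, fun _ hg => hg ▸ hf, by simp⟩

end Constructibility

/-- **Regulous functions, Théorème `const`**: every Euclidean-closed Zariski constructible
subset of `ℝⁿ` is the zero set of a `k`-regulous function; consequently the `k`-regulously
closed subsets of `ℝⁿ` are exactly the Euclidean-closed Zariski constructible ones. -/
theorem regulously_closed_iff_closed_constructible (n k : ℕ) :
    (∀ F : Set (Fin n → ℝ), IsClosed F → ZariskiConstructible n F →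
      ∃ f : (Fin n → ℝ) → ℝ, IsRegulous n k f ∧ {x : Fin n → ℝ | f x = 0} = F) ∧
    (∀ F : Set (Fin n → ℝ),
      RegulouslyClosed n k F ↔ (IsClosed F ∧ ZariskiConstructible n F)) := by
  have hexists (F : Set (Fin n → ℝ)) (hFc : IsClosed F) (hF : ZariskiConstructible n F) :
      ∃ f : (Fin n → ℝ) → ℝ, IsRegulous n k f ∧ {x : Fin n → ℝ | f x = 0} = F :=
    hF.exists_isRegulous hFc k
  refine ⟨hexists, fun F => ⟨fun hF => ⟨hF.isClosed, hF.zariskiConstructible⟩, ?_⟩⟩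
  rintro ⟨hFc, hF⟩
  obtain ⟨f, hf, rfl⟩ := hexists F hFc hF
  exact hf.regulouslyClosed_setOf_eq_zero
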